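/- arXiv:math/0204043 — 3 statements merged into one kernel-verified Lean document; each statement's English description precedes it below -/
import Mathlib

section
/- Suppose p > 5, the integer m > 1 divides p−1, ζ ∈ F_p^× has order m, a = (a1,a2,a3,a4) is a type, and ζ_i = ζ^{a_i}. Assume that the image of Γ in PGL_2(F_p) (the quotient of GL_2(F_p) by its center) is neither the image of SL_2(F_p) nor all of PGL_2(F_p), and that there is no permutation (b1,b2,b3,b4) of (a1,a2,a3,a4) with b1 = b2, b3 = b4 and 2(b1 + b3) ≡ m (mod 2m). Then for all i ≠ j, the multiplicative order of ζ_i·ζ_j in F_p^× belongs to {2, 3, 4, 5}. -/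
/-!
Let `λ_k`, for `k = 1, 2, 3`, be the determinants `ζ₂ζ₃`, `ζ₁ζ₃`, `ζ₁ζ₂` of the three generators.
Each `B_k` has eigenvalues `1` and `λ_k`, the product `B1 * B2 * B3` is scalar, and `B1`, `B3` have
no common eigenvector. As `ζ₁ζ₂ζ₃ζ₄ = 1`, each of the six products `ζ_i ζ_j` is some `λ_k` or its
inverse, so it suffices to bound the orders of the `λ_k`.

Call a nonscalar matrix with a double eigenvalue parabolic. If `Γ` contains a parabolic element,
irreducibility gives a second one, conjugate to it, with another fixed line. Since `F_p` is a prime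
field, their powers, up to scalars, run through two opposite root subgroups, which generate
`SL₂(p)` (`mem_of_det_eq_one`). The image of `Γ` in `PGL₂(p)` then contains that of `SL₂(p)`, so it
is one of the two groups excluded by hypothesis (`map_eq_or_eq_top`). Hence `Γ` has no parabolic
element; in particular no `λ_k` equals `1`.

Now every nonscalar element of `Γ` fixes exactly two points of the projective line over an algebraic
closure of `F_p`. The classical orbit count for finite rotation groups (`ncard_orbit_le_two`) shows
that a point whose stabilizer in the image of `Γ` has order at least `6` has an orbit of size at
most `2`. If some `λ_k` has order at least `6`, this applies to the fixed point of `B_k` with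
eigenvalue `1`; by irreducibility its orbit is a pair of points, which each generator fixes or
swaps. The product being scalar, exactly two generators swap the points; they have trace
`1 + λ_i = 0`, so two of the `λ_i` equal `-1` (`exists_two_reflections`). That is precisely
the type excluded by the condition on permutations of `a`.
-/

open Matrix

/-- The matrix `B1` from Völklein's braid computation. -/
def MatB1 (p : ℕ) (z2 z3 : ZMod p) : Matrix (Fin 2) (Fin 2) (ZMod p) :=
  !![z2, -1 + z3; z2 * (-1 + z2), 1 - z2 + z2 * z3]

/-- The matrix `B2`. -/
def MatB2 (p : ℕ) (z1 z2 z3 : ZMod p) : Matrix (Fin 2) (Fin 2) (ZMod p) :=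
  !![z1 * (1 - z2 + z2 * z3), z2⁻¹ * (-1 + z3) * (-1 + z1 - z1 * z2 + z1 * z2 * z3);
     z1 * z2 * (1 - z2), 1 - z1 + z1 * z2 + z1 * z3 - z1 * z2 * z3]

/-- The matrix `B3`. -/
def MatB3 (p : ℕ) (z1 z2 z3 : ZMod p) : Matrix (Fin 2) (Fin 2) (ZMod p) :=
  !![1, z1 * (1 - z3); 0, z1 * z2]


/-! ### Orbit counting for actions with two fixed points per element -/

section Counting
open MulAction

variable {G X : Type*} [Group G] [MulAction G X]

/-- Deleting an orbit from a finite invariant set lowers the sum of the stabilizer orders by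
exactly `|G|`. -/
lemma exists_remove_orbit [Finite G] (Z : Finset X) (hZ : ∀ g : G, ∀ x ∈ Z, g • x ∈ Z) {x : X}
    (hx : x ∈ Z) : ∃ Z' : Finset X, Z' ⊆ Z ∧ (∀ g : G, ∀ x ∈ Z', g • x ∈ Z') ∧
      ∑ y ∈ Z, Nat.card (stabilizer G y) = ∑ y ∈ Z', Nat.card (stabilizer G y) + Nat.card G ∧
      Z.card = Z'.card + (orbit G x).ncard := by
  classical
  have hfin : (orbit G x).Finite := Set.finite_range _
  have hsub : hfin.toFinset ⊆ Z := by
    intro y hy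
    obtain ⟨g, rfl⟩ := hfin.mem_toFinset.1 hy
    exact hZ g x hx
  refine ⟨Z \ hfin.toFinset, Finset.sdiff_subset, ?_, ?_, ?_⟩
  · intro g y hy
    simp only [Finset.mem_sdiff, Set.Finite.mem_toFinset] at hy ⊢
    refine ⟨hZ g y hy.1, fun h => hy.2 ?_⟩
    obtain ⟨k, hk⟩ := h
    exact ⟨g⁻¹ * k, by rw [← inv_smul_smul g y, ← hk]; exact mul_smul _ _ _⟩
  · rw [← Finset.sum_sdiff hsub]
    congr 1
    have : ∀ y ∈ hfin.toFinset, Nat.card (stabilizer G y) = Nat.card (stabilizer G x) := by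
      intro y hy
      obtain ⟨g, rfl⟩ := hfin.mem_toFinset.1 hy
      exact Nat.card_congr (stabilizerEquivStabilizer (G := G) (g := g⁻¹) (a := g • x) (b := x)
        (by simp)).toEquiv
    rw [Finset.sum_congr rfl this, Finset.sum_const, smul_eq_mul,
      ← Set.ncard_eq_toFinset_card _ hfin, ← Nat.card_coe_set_eq, ← Nat.card_prod]
    exact Nat.card_congr (orbitProdStabilizerEquivGroup G x)
  · rw [← Finset.card_sdiff_add_card_eq_card hsub, Set.ncard_eq_toFinset_card _ hfin]

/-- If every nontrivial element of a finite group fixes exactly two points, a point whose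
stabilizer has order at least `6` has an orbit of size at most `2`. The points with nontrivial
stabilizer form a finite invariant set `Y`, and counting pairs `(g, y)` with `g • y = y` gives
`∑ y ∈ Y, |G_y| + 2 = |Y| + 2|G|`. Hence `Y` consists of two or three orbits, and the
stabilizer orders `n_i` satisfy `∑ (1 - 1 / n_i) = 2 - 2 / |G|`. For three orbits this is
`(n_i) = (2, 2, n)`, with the orbit of order-`n` stabilizers of size `2`, or else
`n_i ≤ 5` for all `i`. -/
lemma ncard_orbit_le_two [Finite G] (h2 : ∀ g : G, g ≠ 1 → (fixedBy X g).ncard = 2) (P : X)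
    (hP : 6 ≤ Nat.card (stabilizer G P)) : (orbit G P).ncard ≤ 2 := by
  classical
  have := Fintype.ofFinite G
  have hfin : ∀ g : G, g ≠ 1 → (fixedBy X g).Finite := fun g hg =>
    Set.finite_of_ncard_pos (by rw [h2 g hg]; norm_num)
  have hYfin : {x : X | ∃ g : G, g ≠ 1 ∧ g • x = x}.Finite := by
    have : {x : X | ∃ g : G, g ≠ 1 ∧ g • x = x} = ⋃ g ∈ {g : G | g ≠ 1}, fixedBy X g := by
      ext x; simp
    rw [this]
    exact Set.Finite.biUnion (Set.toFinite _) hfin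
  set Y := hYfin.toFinset with hY
  have memY : ∀ x, x ∈ Y ↔ ∃ g : G, g ≠ 1 ∧ g • x = x := by simp [hY]
  have hinv : ∀ g : G, ∀ x ∈ Y, g • x ∈ Y := by
    intro g x hx
    obtain ⟨h, h1, hh⟩ := (memY x).1 hx
    refine (memY _).2 ⟨g * h * g⁻¹, by simpa using h1, ?_⟩
    simp [mul_smul, hh]
  have hstab : ∀ y ∈ Y, 2 ≤ Nat.card (stabilizer G y) := by
    intro y hy
    obtain ⟨h, h1, hh⟩ := (memY y).1 hy
    have : Nontrivial (stabilizer G y) :=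
      ⟨⟨⟨h, hh⟩, 1, fun e => h1 (by simpa using congrArg Subtype.val e)⟩⟩
    exact Finite.one_lt_card
  have hkn : ∀ y : X, (orbit G y).ncard * Nat.card (stabilizer G y) = Nat.card G := by
    intro y
    rw [← Nat.card_coe_set_eq, ← Nat.card_prod]
    exact Nat.card_congr (orbitProdStabilizerEquivGroup G y)
  have hN : 1 ≤ Nat.card G := Nat.card_pos
  -- both sides count the pairs `(g, y)` with `g • y = y`, up to the term `2` for `g = 1`
  have htotal : ∑ y ∈ Y, Nat.card (stabilizer G y) + 2 = Y.card + 2 * Nat.card G := by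
    have e1 : ∀ y : X, Nat.card (stabilizer G y) = ∑ g : G, if g • y = y then 1 else 0 := by
      intro y
      rw [Finset.sum_boole, Nat.cast_id, ← Fintype.card_subtype, ← Nat.card_eq_fintype_card]
      rfl
    simp_rw [e1]
    rw [Finset.sum_comm, ← Finset.add_sum_erase _ _ (Finset.mem_univ (1 : G))]
    have e2 : ∀ g ∈ Finset.univ.erase (1 : G), (∑ y ∈ Y, if g • y = y then 1 else 0) = 2 := by
      intro g hg
      have hg : g ≠ 1 := by simpa using hg
      rw [Finset.sum_boole, Nat.cast_id, ← h2 g hg, ← Set.ncard_coe_finset]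
      congr 1
      ext y
      simp only [Finset.coe_filter, Set.mem_ofPred_eq, mem_fixedBy, memY, and_iff_right_iff_imp]
      exact fun h => ⟨g, hg, h⟩
    rw [Finset.sum_congr rfl e2]
    simp only [one_smul, if_true, Finset.sum_const, smul_eq_mul, mul_one,
      Finset.card_erase_of_mem (Finset.mem_univ _), Finset.card_univ, ← Nat.card_eq_fintype_card]
    omega
  have hne : ∀ Z : Finset X, Z.card < ∑ y ∈ Z, Nat.card (stabilizer G y) → ∃ x, x ∈ Z := by
    intro Z h
    by_contra! h'
    have : Z = ∅ := Finset.eq_empty_of_forall_notMem h'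
    simp [this] at h
  have hle : ∀ Z ⊆ Y, 2 * Z.card ≤ ∑ y ∈ Z, Nat.card (stabilizer G y) := by
    intro Z hZ
    rw [mul_comm, ← smul_eq_mul]
    exact Finset.card_nsmul_le_sum _ _ _ fun y hy => hstab y (hZ hy)
  by_contra! hk
  have hPY : P ∈ Y := by
    have : Nontrivial (stabilizer G P) := Finite.one_lt_card_iff_nontrivial.1 (by omega)
    obtain ⟨h, h1⟩ := exists_ne (1 : stabilizer G P)
    exact (memY P).2 ⟨h, by simpa using h1, h.2⟩
  -- as the orbit of `P` has more than two points, `htotal` forces `Y` to consist of three orbits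
  obtain ⟨Y1, s1, i1, a1, b1⟩ := exists_remove_orbit Y hinv hPY
  obtain ⟨Q1, hQ1⟩ := hne Y1 (by omega)
  obtain ⟨Y2, s2, i2, a2, b2⟩ := exists_remove_orbit Y1 i1 hQ1
  have n1 := hstab Q1 (s1 hQ1)
  have k1 := hkn Q1
  have k0 := hkn P
  have ho : ∀ y : X, 1 ≤ (orbit G y).ncard := fun y => by
    rw [Nat.one_le_iff_ne_zero]; intro h0; have := hkn y; rw [h0] at this; omega
  have o1 := ho Q1
  obtain ⟨Q2, hQ2⟩ := hne Y2 (by omega)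
  obtain ⟨Y3, s3, i3, a3, b3⟩ := exists_remove_orbit Y2 i2 hQ2
  have n2 := hstab Q2 (s1 (s2 hQ2))
  have k2 := hkn Q2
  have o2 := ho Q2
  have l0 : (orbit G P).ncard * 6 ≤ Nat.card G := by rw [← k0]; gcongr
  have l1 : (orbit G Q1).ncard * 2 ≤ Nat.card G := by rw [← k1]; gcongr
  have l2 : (orbit G Q2).ncard * 2 ≤ Nat.card G := by rw [← k2]; gcongr
  have hY3 : Y3 = ∅ := by
    by_contra hcon
    obtain ⟨Q3, hQ3⟩ := Finset.nonempty_iff_ne_empty.2 hcon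
    obtain ⟨Y4, s4, i4, a4, b4⟩ := exists_remove_orbit Y3 i3 hQ3
    have n3 := hstab Q3 (s1 (s2 (s3 hQ3)))
    have l3 : (orbit G Q3).ncard * 2 ≤ Nat.card G := by rw [← hkn Q3]; gcongr
    have := hle Y4 ((((s4.trans s3).trans s2)).trans s1)
    omega
  simp only [hY3, Finset.sum_empty, Finset.card_empty] at a3 b3
  -- `∑ (1 - 1 / n_i) < 2` rules out `n_i ≥ 6, 2, 3`, as `5 / 6 + 1 / 2 + 2 / 3 = 2`; so the two
  -- other stabilizers both have order `2`
  rcases Nat.lt_or_ge 2 (Nat.card (stabilizer G Q1)) with h | h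
  · have l1 : (orbit G Q1).ncard * 3 ≤ Nat.card G := by rw [← k1]; gcongr; omega
    rcases Nat.lt_or_ge 2 (Nat.card (stabilizer G Q2)) with h' | h'
    · have l2 : (orbit G Q2).ncard * 3 ≤ Nat.card G := by rw [← k2]; gcongr; omega
      omega
    · have : Nat.card (stabilizer G Q2) = 2 := by omega
      rw [this] at k2
      omega
  · have : Nat.card (stabilizer G Q1) = 2 := by omega
    rw [this] at k1
    rcases Nat.lt_or_ge 2 (Nat.card (stabilizer G Q2)) with h' | h'
    · have l2 : (orbit G Q2).ncard * 3 ≤ Nat.card G := by rw [← k2]; gcongr; omega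
      omega
    · have : Nat.card (stabilizer G Q2) = 2 := by omega
      rw [this] at k2
      omega

end Counting

/-! ### Plane linear algebra and the action on the projective line -/

section Plane

variable {K : Type*} [Field K]

/-- A `2 × 2` matrix is scalar. -/
def IsScal (M : Matrix (Fin 2) (Fin 2) K) : Prop := M 0 1 = 0 ∧ M 1 0 = 0 ∧ M 0 0 = M 1 1

/-- The determinant of the matrix with columns `v` and `w`. -/
def area (v w : Fin 2 → K) : K := v 0 * w 1 - v 1 * w 0

lemma exists_smul_of_area_eq_zero {v w : Fin 2 → K} (hv : v ≠ 0) (h : area v w = 0) :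
    ∃ c : K, w = c • v := by
  unfold area at h
  by_cases h0 : v 0 = 0
  · have h1 : v 1 ≠ 0 := fun h1 => hv (by ext i; fin_cases i <;> simpa)
    refine ⟨w 1 / v 1, ?_⟩
    ext i
    fin_cases i
    · have : w 0 = 0 := by simpa [h0, h1] using h
      simp [this, h0]
    · simp [h1]
  · refine ⟨w 0 / v 0, ?_⟩
    ext i
    fin_cases i
    · simp [h0]
    · simp
      field_simp
      linear_combination h

lemma trace_mul_area (M : Matrix (Fin 2) (Fin 2) K) (v w : Fin 2 → K) :
    M.trace * area v w = area (M *ᵥ v) w + area v (M *ᵥ w) := by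
  simp [area, trace_fin_two]; ring

@[simp] lemma area_smul_left (c : K) (v w : Fin 2 → K) : area (c • v) w = c * area v w := by
  simp [area]; ring

@[simp] lemma area_smul_right (c : K) (v w : Fin 2 → K) : area v (c • w) = c * area v w := by
  simp [area]; ring

@[simp] lemma area_self (v : Fin 2 → K) : area v v = 0 := by
  simp [area]; ring

lemma area_mulVec (M : Matrix (Fin 2) (Fin 2) K) (v w : Fin 2 → K) :
    area (M *ᵥ v) (M *ᵥ w) = M.det * area v w := by
  simp [area, det_fin_two]; ring

/-- Cayley-Hamilton, applied to an eigenvector. -/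
lemma eigenvalue_eq {M : Matrix (Fin 2) (Fin 2) K} {v : Fin 2 → K} (hv : v ≠ 0) {c : K}
    (h : M *ᵥ v = c • v) : c ^ 2 - M.trace * c + M.det = 0 := by
  have h0 := congrFun h 0
  have h1 := congrFun h 1
  simp at h0 h1
  by_cases hz : v 0 = 0
  · have hz1 : v 1 ≠ 0 := fun h1 => hv (by ext i; fin_cases i <;> simpa)
    apply mul_right_cancel₀ hz1
    rw [trace_fin_two, det_fin_two]
    linear_combination (M 0 0 - c) * h1 - M 1 0 * h0
  · apply mul_right_cancel₀ hz
    rw [trace_fin_two, det_fin_two]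
    linear_combination (M 1 1 - c) * h0 - M 0 1 * h1

lemma exists_eigenvector {M : Matrix (Fin 2) (Fin 2) K} {c : K}
    (h : c ^ 2 - M.trace * c + M.det = 0) : ∃ v : Fin 2 → K, v ≠ 0 ∧ M *ᵥ v = c • v := by
  obtain ⟨v, hv, hMv⟩ := (exists_mulVec_eq_zero_iff (M := M - c • (1 : Matrix _ _ K))).2 (by
    rw [det_fin_two]
    rw [trace_fin_two, det_fin_two] at h
    simp
    linear_combination h)
  refine ⟨v, hv, ?_⟩
  rw [sub_mulVec, smul_mulVec, one_mulVec, sub_eq_zero] at hMv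
  exact hMv

open Projectivization MulAction
open scoped LinearAlgebra.Projectivization

lemma smul_mk_eq_iff (A : GL (Fin 2) K) {v w : Fin 2 → K} (hv : v ≠ 0) (hw : w ≠ 0) :
    A • mk K v hv = mk K w hw ↔ ∃ c : K, A.val *ᵥ v = c • w := by
  rw [smul_mk, mk_eq_mk_iff']
  have : A • v = A.val *ᵥ v := by simp
  rw [this]
  simp only [eq_comm]

lemma mulVec_ne_zero (A : GL (Fin 2) K) {v : Fin 2 → K} (hv : v ≠ 0) : A.val *ᵥ v ≠ 0 := by
  intro h
  apply hv
  have := congrArg ((A⁻¹).val *ᵥ ·) h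
  simpa only [mulVec_mulVec, mulVec_zero, ← Units.val_mul, inv_mul_cancel, Units.val_one,
    one_mulVec] using this

lemma isScal_iff_forall_smul (A : GL (Fin 2) K) :
    IsScal A.val ↔ ∀ x : ℙ K (Fin 2 → K), A • x = x := by
  constructor
  · rintro ⟨h1, h2, h3⟩ x
    induction x using Projectivization.ind with
    | h v hv =>
      rw [smul_mk_eq_iff]
      refine ⟨A.val 0 0, ?_⟩
      ext i; fin_cases i <;> simp [h1, h2, h3]
  · intro h
    obtain ⟨c0, h0⟩ := (smul_mk_eq_iff A (v := ![1, 0]) (w := ![1, 0]) (by simp) (by simp)).1 (h _)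
    obtain ⟨c1, h1⟩ := (smul_mk_eq_iff A (v := ![0, 1]) (w := ![0, 1]) (by simp) (by simp)).1 (h _)
    obtain ⟨c2, h2⟩ := (smul_mk_eq_iff A (v := ![1, 1]) (w := ![1, 1]) (by simp) (by simp)).1 (h _)
    simp at h0 h1 h2
    refine ⟨h1.1, h0.2, ?_⟩
    rw [h0.2, h1.1] at h2
    simp at h2
    rw [h2.1, h2.2]

/-- Over an algebraically closed field, an element with two distinct eigenvalues fixes exactly two
points of the projective line. -/
lemma ncard_fixedBy_eq_two [IsAlgClosed K] (hK : (2 : K) ≠ 0) (A : GL (Fin 2) K)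
    (h : A.val.trace ^ 2 ≠ 4 * A.val.det) : (fixedBy (ℙ K (Fin 2 → K)) A).ncard = 2 := by
  obtain ⟨s, hs⟩ := IsAlgClosed.exists_pow_nat_eq (A.val.trace ^ 2 - 4 * A.val.det) (n := 2)
    (by norm_num)
  have hs0 : s ≠ 0 := by
    rintro rfl
    apply h
    linear_combination -hs
  set t := A.val.trace with ht
  have hr : t = (t + s) / 2 + (t - s) / 2 := by field_simp; ring
  have hr' : A.val.det = (t + s) / 2 * ((t - s) / 2) := by
    have h4 : (4 : K) ≠ 0 := by
      rw [show (4 : K) = 2 * 2 by norm_num]; exact mul_ne_zero hK hK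
    apply mul_left_cancel₀ h4
    field_simp
    linear_combination hs
  have hne : (t + s) / 2 ≠ (t - s) / 2 := by
    intro hcon
    apply hs0
    field_simp at hcon
    apply mul_left_cancel₀ hK
    linear_combination hcon
  generalize (t + s) / 2 = r1 at *
  generalize (t - s) / 2 = r2 at *
  obtain ⟨v, hv, hAv⟩ := exists_eigenvector (M := A.val) (c := r1) (by rw [← ht, hr', hr]; ring)
  obtain ⟨w, hw, hAw⟩ := exists_eigenvector (M := A.val) (c := r2) (by rw [← ht, hr', hr]; ring)
  -- eigenvectors for the same simple eigenvalue `c` are proportional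
  have key : ∀ (x y : Fin 2 → K) (c : K), c = r1 ∨ c = r2 → x ≠ 0 → A.val *ᵥ x = c • x →
      A.val *ᵥ y = c • y → ∃ d : K, y = d • x := by
    intro x y c hc hx hAx hAy
    apply exists_smul_of_area_eq_zero hx
    have := trace_mul_area A.val x y
    rw [hAx, hAy, area_smul_left, area_smul_right, ← ht, hr] at this
    rcases hc with rfl | rfl
    · have h3 : (c - r2) * area x y = 0 := by linear_combination -this
      exact (mul_eq_zero.1 h3).resolve_left (sub_ne_zero.2 hne)
    · have h3 : (r1 - c) * area x y = 0 := by linear_combination this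
      exact (mul_eq_zero.1 h3).resolve_left (sub_ne_zero.2 hne)
  rw [Set.ncard_eq_two]
  refine ⟨mk K v hv, mk K w hw, ?_, ?_⟩
  · rw [Ne, mk_eq_mk_iff']
    rintro ⟨d, rfl⟩
    rw [mulVec_smul, hAw, smul_smul, smul_smul, mul_comm] at hAv
    have hd : d ≠ 0 := by rintro rfl; simp at hv
    have := smul_left_injective K hw hAv
    exact hne (mul_right_cancel₀ hd this).symm
  · ext x
    induction x using Projectivization.ind with
    | h y hy =>
      simp only [mem_fixedBy, Set.mem_insert_iff, Set.mem_singleton_iff, smul_mk_eq_iff,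
        mk_eq_mk_iff']
      constructor
      · rintro ⟨c, hc⟩
        have hc' := eigenvalue_eq hy hc
        rw [← ht, hr, hr'] at hc'
        have : (c - r1) * (c - r2) = 0 := by linear_combination hc'
        rcases mul_eq_zero.1 this with h | h
        · rw [sub_eq_zero] at h
          subst h
          obtain ⟨d, hd⟩ := key v y c (Or.inl rfl) hv hAv hc
          exact Or.inl ⟨d, hd.symm⟩
        · rw [sub_eq_zero] at h
          subst h
          obtain ⟨d, hd⟩ := key w y c (Or.inr rfl) hw hAw hc
          exact Or.inr ⟨d, hd.symm⟩
      · rintro (⟨d, rfl⟩ | ⟨d, rfl⟩)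
        · exact ⟨r1, by rw [mulVec_smul, hAv, smul_comm]⟩
        · exact ⟨r2, by rw [mulVec_smul, hAw, smul_comm]⟩

/-- A matrix swapping two lines is antidiagonal in a suitable basis. -/
lemma trace_eq_zero_of_swap (A : GL (Fin 2) K) {x y : ℙ K (Fin 2 → K)} (hxy : x ≠ y)
    (h1 : A • x = y) (h2 : A • y = x) : A.val.trace = 0 := by
  induction x using Projectivization.ind with
  | h v hv =>
  induction y using Projectivization.ind with
  | h w hw =>
    obtain ⟨c, hc⟩ := (smul_mk_eq_iff A hv hw).1 h1
    obtain ⟨d, hd⟩ := (smul_mk_eq_iff A hw hv).1 h2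
    have := trace_mul_area A.val v w
    rw [hc, hd, area_smul_left, area_smul_right, area_self, area_self] at this
    simp only [mul_zero, add_zero, mul_eq_zero] at this
    refine this.resolve_right fun h => hxy ?_
    obtain ⟨d, hd⟩ := exists_smul_of_area_eq_zero hv h
    rw [eq_comm, mk_eq_mk_iff']
    exact ⟨d, hd.symm⟩

end Plane

/-! ### Finite groups generated by three pseudoreflections -/

section Finite
open Projectivization MulAction
open scoped LinearAlgebra.Projectivization

variable {K : Type*} [Field K]

/-- The order in `PGL₂` of a matrix with eigenvalues `1` and `l` is a multiple of the order
of `l`. -/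
lemma pow_eq_one_of_isScal_pow (B : GL (Fin 2) K) (l : Kˣ) (hdet : B.val.det = l)
    {v : Fin 2 → K} (hv : v ≠ 0) (hBv : B.val *ᵥ v = v) (n : ℕ) (h : IsScal (B ^ n).val) :
    l ^ n = 1 := by
  have hpow : ∀ n : ℕ, (B ^ n).val *ᵥ v = v := by
    intro n
    induction n with
    | zero => simp
    | succ n ih => rw [pow_succ, Units.val_mul, ← mulVec_mulVec, hBv, ih]
  have hc := hpow n
  have hd : (B ^ n).val.det = (l : K) ^ n := by
    rw [Units.val_pow_eq_pow_val, det_pow, hdet]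
  obtain ⟨h1, h2, h3⟩ := h
  have h00 : (B ^ n).val 0 0 = 1 := by
    have e0 := congrFun hc 0
    have e1 := congrFun hc 1
    simp only [mulVec_fin_two, h1, h2, ← h3] at e0 e1
    simp only [cons_val_zero, cons_val_one, zero_mul, add_zero, zero_add] at e0 e1
    by_cases hz : v 0 = 0
    · have hz1 : v 1 ≠ 0 := fun h1 => hv (by ext i; fin_cases i <;> simpa)
      exact mul_right_cancel₀ hz1 (by rw [e1, one_mul])
    · exact mul_right_cancel₀ hz (by rw [e0, one_mul])
  rw [det_fin_two, h1, h2, ← h3, h00] at hd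
  ext
  push_cast
  rw [← hd]
  ring

/-- Let `B 0`, `B 1`, `B 2` have eigenvalues `1` and `l i`, have scalar product, have no common
eigenvector, and lie in a finite group without parabolic elements. If some `l i` has order at
least `6`, then the fixed point of `B i` has an orbit of size `2` on the projective line. Each `B j`
fixes or swaps the two points, an even positive number of them swap, and a swap has trace
`1 + l j = 0`. -/
lemma exists_two_reflections [IsAlgClosed K] (hK : (2 : K) ≠ 0) (Γ : Subgroup (GL (Fin 2) K))
    [Finite Γ] (hpar : ∀ γ ∈ Γ, ¬ IsScal γ.val → γ.val.trace ^ 2 ≠ 4 * γ.val.det)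
    (B : Fin 3 → GL (Fin 2) K) (hB : ∀ i, B i ∈ Γ) (l : Fin 3 → Kˣ)
    (htr : ∀ i, (B i).val.trace = 1 + l i) (hdet : ∀ i, (B i).val.det = l i)
    (hprod : IsScal (B 0 * B 1 * B 2).val)
    (hirr : ∀ v : Fin 2 → K, v ≠ 0 → ¬ ∀ i, ∃ c : K, (B i).val *ᵥ v = c • v)
    (i₀ : Fin 3) (h6 : 6 ≤ orderOf (l i₀)) : ∃ i j, i ≠ j ∧ l i = -1 ∧ l j = -1 := by
  obtain ⟨v, hv, hBv⟩ := exists_eigenvector (M := (B i₀).val) (c := 1) (by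
    rw [htr, hdet]; ring)
  rw [one_smul] at hBv
  let φ := toPermHom (GL (Fin 2) K) (ℙ K (Fin 2 → K))
  let G := Γ.map φ
  have : Finite G := Finite.of_surjective (φ.subgroupMap Γ) (φ.subgroupMap_surjective Γ)
  set P : ℙ K (Fin 2 → K) := mk K v hv with hP
  have h2 : ∀ g : G, g ≠ 1 → (fixedBy (ℙ K (Fin 2 → K)) g).ncard = 2 := by
    rintro ⟨_, γ, hγ, rfl⟩ hne
    have hsc : ¬ IsScal γ.val := by
      intro h
      apply hne
      ext x : 2
      exact (isScal_iff_forall_smul γ).1 h x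
    exact ncard_fixedBy_eq_two hK γ (hpar γ hγ hsc)
  let s : stabilizer G P := ⟨⟨φ (B i₀), B i₀, hB i₀, rfl⟩, by
    change B i₀ • P = P
    rw [hP, smul_mk_eq_iff]
    exact ⟨1, by rw [hBv, one_smul]⟩⟩
  have hs : 6 ≤ Nat.card (stabilizer G P) := by
    refine h6.trans (le_trans ?_ (orderOf_le_card (x := s)))
    refine Nat.le_of_dvd (orderOf_pos s) (orderOf_dvd_of_pow_eq_one ?_)
    refine pow_eq_one_of_isScal_pow (B i₀) (l i₀) (hdet i₀) hv hBv _ ?_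
    rw [isScal_iff_forall_smul]
    intro x
    have h1 : φ (B i₀) ^ orderOf s = 1 := by
      have := congrArg (fun z : stabilizer G P => ((z : G) : Equiv.Perm (ℙ K (Fin 2 → K))))
        (pow_orderOf_eq_one s)
      exact (by simpa only [SubmonoidClass.coe_pow, OneMemClass.coe_one] using this)
    rw [← map_pow] at h1
    exact congrArg (fun e : Equiv.Perm (ℙ K (Fin 2 → K)) => e x) h1
  have horb := ncard_orbit_le_two h2 P hs
  have hmem : ∀ i, ∀ x ∈ orbit G P, B i • x ∈ orbit G P := by
    intro i x hx
    obtain ⟨k, rfl⟩ := hx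
    exact ⟨⟨φ (B i), B i, hB i, rfl⟩ * k, mul_smul (⟨φ (B i), B i, hB i, rfl⟩ : G) k P⟩
  have hPo : P ∈ orbit G P := mem_orbit_self P
  have hirr' : ¬ ∀ i, B i • P = P := by
    intro h
    exact hirr v hv fun i => (smul_mk_eq_iff _ hv hv).1 (h i)
  obtain ⟨i₁, hi₁⟩ := not_forall.1 hirr'
  set Q := B i₁ • P with hQ
  have hS : ∀ x ∈ orbit G P, x = P ∨ x = Q := by
    intro x hx
    by_contra! hcon
    have hsub : ({P, Q, x} : Set (ℙ K (Fin 2 → K))) ⊆ orbit G P := by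
      rintro y (rfl | rfl | rfl)
      exacts [hPo, hmem _ _ hPo, hx]
    have h3 : ({P, Q, x} : Set (ℙ K (Fin 2 → K))).ncard = 3 :=
      Set.ncard_eq_three.2 ⟨P, Q, x, Ne.symm hi₁, hcon.1.symm, hcon.2.symm, rfl⟩
    have := Set.ncard_le_ncard hsub (Set.finite_range _)
    omega
  -- each `B i` fixes both points of the orbit or swaps them
  have hdich : ∀ i, (B i • P = P ∧ B i • Q = Q) ∨ (B i • P = Q ∧ B i • Q = P) := by
    intro i
    have hne : B i • P ≠ B i • Q := fun h => hi₁ (MulAction.injective _ h).symm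
    rcases hS _ (hmem i P hPo) with h | h <;>
      rcases hS _ (hmem i Q (hmem _ _ hPo)) with h' | h'
    · exact absurd (h.trans h'.symm) hne
    · exact Or.inl ⟨h, h'⟩
    · exact Or.inr ⟨h, h'⟩
    · exact absurd (h.trans h'.symm) hne
  have hswap : ∀ i, B i • P = Q → B i • Q = P → l i = -1 := by
    intro i h h'
    have := trace_eq_zero_of_swap (B i) (Ne.symm hi₁) h h'
    rw [htr] at this
    ext
    push_cast
    linear_combination this
  have hpr : B 0 • B 1 • B 2 • P = P := by
    rw [smul_smul, smul_smul]
    exact (isScal_iff_forall_smul _).1 hprod P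
  -- the product fixes `P`, so the number of swaps is even
  rcases hdich 0 with ⟨a0, b0⟩ | ⟨a0, b0⟩ <;> rcases hdich 1 with ⟨a1, b1⟩ | ⟨a1, b1⟩ <;>
    rcases hdich 2 with ⟨a2, b2⟩ | ⟨a2, b2⟩
  · exact absurd (fun i => by fin_cases i <;> assumption) hirr'
  · rw [a2, b1, b0] at hpr; exact absurd hpr hi₁
  · rw [a2, a1, b0] at hpr; exact absurd hpr hi₁
  · exact ⟨1, 2, by decide, hswap _ a1 b1, hswap _ a2 b2⟩
  · rw [a2, a1, a0] at hpr; exact absurd hpr hi₁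
  · exact ⟨0, 2, by decide, hswap _ a0 b0, hswap _ a2 b2⟩
  · exact ⟨0, 1, by decide, hswap _ a0 b0, hswap _ a1 b1⟩
  · exact ⟨0, 1, by decide, hswap _ a0 b0, hswap _ a1 b1⟩

end Finite

/-! ### Irreducible subgroups of `GL₂(p)` with a parabolic element -/

section Parabolic
open Projectivization MulAction
open scoped LinearAlgebra.Projectivization

variable {p : ℕ} [Fact p.Prime]

lemma isScal_conj_iff {K : Type*} [Field K] (P A : GL (Fin 2) K) :
    IsScal (P⁻¹ * A * P).val ↔ IsScal A.val := by
  simp only [isScal_iff_forall_smul, mul_smul]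
  constructor
  · intro h x
    have := h (P⁻¹ • x)
    rw [smul_inv_smul] at this
    simpa using this
  · intro h x
    rw [h, inv_smul_smul]

/-- Powers of a unipotent `1 + N` exhaust `1 + tN`, as the field is prime. -/
lemma one_add_smul_mem (H : Subgroup (GL (Fin 2) (ZMod p))) (hH : ∀ A, IsScal A.val → A ∈ H)
    {A : GL (Fin 2) (ZMod p)} (hA : A ∈ H) {μ : ZMod p} (hμ : μ ≠ 0)
    {N : Matrix (Fin 2) (Fin 2) (ZMod p)} (hN : N * N = 0) (hAN : A.val = μ • (1 + N))
    (t : ZMod p) (B : GL (Fin 2) (ZMod p)) (hB : B.val = 1 + t • N) : B ∈ H := by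
  have hpow : ∀ n : ℕ, A.val ^ n = μ ^ n • (1 + (n : ZMod p) • N) := by
    intro n
    induction n with
    | zero => simp
    | succ n ih =>
      rw [pow_succ, ih, hAN, smul_mul_smul_comm, ← pow_succ]
      congr 1
      rw [mul_add, add_mul, add_mul, smul_mul_assoc, smul_mul_assoc, hN]
      push_cast
      simp only [mul_one, one_mul, smul_zero, add_zero, add_smul, one_smul]
      abel
  have hdiv : B * (A ^ t.val)⁻¹ ∈ H := by
    apply hH
    obtain ⟨u, hu⟩ : ∃ u : (ZMod p)ˣ, (u : ZMod p) * μ ^ t.val = 1 :=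
      ⟨(Units.mk0 μ hμ ^ t.val)⁻¹, by simp [hμ]⟩
    have : B * (A ^ t.val)⁻¹ = GeneralLinearGroup.scalar (Fin 2) u := by
      rw [mul_inv_eq_iff_eq_mul]
      ext1
      rw [Units.val_mul, Units.val_pow_eq_pow_val, hpow, hB, ZMod.natCast_zmod_val]
      simp only [GeneralLinearGroup.coe_scalar, scalar_apply, ← smul_eq_diagonal_mul, smul_smul, hu,
        one_smul]
    rw [this]
    simp [IsScal]
  have := H.mul_mem hdiv (H.pow_mem hA t.val)
  simpa using this

/-- The case of `mem_of_det_eq_one` where two parabolic elements fix the two coordinate axes: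
then the group contains all elementary matrices. -/
lemma mem_of_det_eq_one_aux (H : Subgroup (GL (Fin 2) (ZMod p))) (hH : ∀ A, IsScal A.val → A ∈ H)
    {A C : GL (Fin 2) (ZMod p)} (hA : A ∈ H) (hC : C ∈ H) {μ : ZMod p} (hμ : μ ≠ 0)
    (hAe : A.val *ᵥ ![1, 0] = μ • ![1, 0]) (hAt : A.val.trace = 2 * μ) (hAs : ¬ IsScal A.val)
    (hCe : C.val *ᵥ ![0, 1] = μ • ![0, 1]) (hCt : C.val.trace = 2 * μ) (hCs : ¬ IsScal C.val)
    (S : GL (Fin 2) (ZMod p)) (hS : S.val.det = 1) : S ∈ H := by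
  rw [trace_fin_two] at hAt hCt
  simp at hAe hCe
  obtain ⟨hA0, hA1⟩ := hAe
  obtain ⟨hC0, hC1⟩ := hCe
  rw [hA0] at hAt
  rw [hC1] at hCt
  have hAt' : A.val 1 1 = μ := by linear_combination hAt
  have hCt' : C.val 0 0 = μ := by linear_combination hCt
  have hA2 : A.val 0 1 ≠ 0 := fun h => hAs ⟨h, hA1, hA0.trans hAt'.symm⟩
  have hC2 : C.val 1 0 ≠ 0 := fun h => hCs ⟨hC0, h, hCt'.trans hC1.symm⟩
  have hU : ∀ (t : ZMod p) (B : GL (Fin 2) (ZMod p)), B.val = !![1, t; 0, 1] → B ∈ H := by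
    intro t B hB
    refine one_add_smul_mem H hH hA hμ (N := !![0, A.val 0 1 / μ; 0, 0]) ?_ ?_
      (t * μ / A.val 0 1) B ?_
    · ext i j; fin_cases i <;> fin_cases j <;> simp
    · ext i j; fin_cases i <;> fin_cases j <;> simp [hA0, hA1, hAt']
      field_simp
    · rw [hB]
      ext i j; fin_cases i <;> fin_cases j <;> simp
      field_simp
  have hL : ∀ (t : ZMod p) (B : GL (Fin 2) (ZMod p)), B.val = !![1, 0; t, 1] → B ∈ H := by
    intro t B hB
    refine one_add_smul_mem H hH hC hμ (N := !![0, 0; C.val 1 0 / μ, 0]) ?_ ?_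
      (t * μ / C.val 1 0) B ?_
    · ext i j; fin_cases i <;> fin_cases j <;> simp
    · ext i j; fin_cases i <;> fin_cases j <;> simp [hC0, hC1, hCt']
      field_simp
    · rw [hB]
      ext i j; fin_cases i <;> fin_cases j <;> simp
      field_simp
  let U : ZMod p → GL (Fin 2) (ZMod p) := fun t =>
    GeneralLinearGroup.mkOfDetNeZero !![1, t; 0, 1] (by simp)
  let L : ZMod p → GL (Fin 2) (ZMod p) := fun t =>
    GeneralLinearGroup.mkOfDetNeZero !![1, 0; t, 1] (by simp)
  have hU' : ∀ t, U t ∈ H := fun t => hU t _ rfl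
  have hL' : ∀ t, L t ∈ H := fun t => hL t _ rfl
  have hUv : ∀ t, (U t).val = !![1, t; 0, 1] := fun t => rfl
  have hLv : ∀ t, (L t).val = !![1, 0; t, 1] := fun t => rfl
  have hgen : ∀ T : GL (Fin 2) (ZMod p), T.val.det = 1 → T.val 1 0 ≠ 0 → T ∈ H := by
    intro T hT hc
    have : T = U ((T.val 0 0 - 1) / T.val 1 0) * L (T.val 1 0) *
        U ((T.val 1 1 - 1) / T.val 1 0) := by
      ext1
      rw [Units.val_mul, Units.val_mul, hUv, hLv, hUv]
      rw [det_fin_two] at hT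
      ext i j
      fin_cases i <;> fin_cases j <;> simp [mul_apply, Fin.sum_univ_two] <;> field_simp
      · ring
      · linear_combination -hT
      · ring
    rw [this]
    exact H.mul_mem (H.mul_mem (hU' _) (hL' _)) (hU' _)
  by_cases hc : S.val 1 0 = 0
  · have h := hgen (S * L 1) (by rw [Units.val_mul, det_mul, hS, hLv]; simp) (by
      rw [Units.val_mul, hLv]
      rw [det_fin_two, hc] at hS
      simp only [mul_apply, Fin.sum_univ_two, hc]
      simp
      rintro h0
      simp [h0] at hS)
    simpa using H.mul_mem h (H.inv_mem (hL' 1))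
  · exact hgen S hS hc

/-- A subgroup of `GL₂(p)` that contains the scalars and a parabolic element and fixes no point of
the projective line contains `SL₂(p)`: some conjugate of the parabolic element has a different
fixed point, and the two fixed lines may be moved to the coordinate axes. -/
lemma mem_of_det_eq_one (hp2 : (2 : ZMod p) ≠ 0) (H : Subgroup (GL (Fin 2) (ZMod p)))
    (hH : ∀ A, IsScal A.val → A ∈ H)
    (hirr : ∀ v : Fin 2 → ZMod p, v ≠ 0 → ∃ g ∈ H, ¬ ∃ c : ZMod p, g.val *ᵥ v = c • v)
    {γ : GL (Fin 2) (ZMod p)} (hγ : γ ∈ H) (hsc : ¬ IsScal γ.val)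
    (hdisc : γ.val.trace ^ 2 = 4 * γ.val.det)
    (S : GL (Fin 2) (ZMod p)) (hS : S.val.det = 1) : S ∈ H := by
  obtain ⟨μ, hμ⟩ : ∃ μ, γ.val.trace = 2 * μ := ⟨γ.val.trace / 2, by field_simp⟩
  have h4 : (4 : ZMod p) ≠ 0 := by
    rw [show (4 : ZMod p) = 2 * 2 by norm_num]; exact mul_ne_zero hp2 hp2
  have hdet : γ.val.det = μ ^ 2 := by
    apply mul_left_cancel₀ h4
    rw [← hdisc, hμ]; ring
  have hμ0 : μ ≠ 0 := by
    rintro rfl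
    have := (γ.isUnit.map detMonoidHom).ne_zero
    simp [hdet] at this
  obtain ⟨v, hv, hγv⟩ := exists_eigenvector (M := γ.val) (c := μ) (by rw [hμ, hdet]; ring)
  obtain ⟨g, hg, hgv⟩ := hirr v hv
  have hD : area v (g.val *ᵥ v) ≠ 0 := fun h => hgv (exists_smul_of_area_eq_zero hv h)
  set w := g.val *ᵥ v with hw
  let P : GL (Fin 2) (ZMod p) := GeneralLinearGroup.mkOfDetNeZero !![v 0, w 0; v 1, w 1] (by
    rw [det_fin_two]; simpa [area, mul_comm] using hD)
  have hP0 : P.val *ᵥ ![1, 0] = v := by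
    change !![v 0, w 0; v 1, w 1] *ᵥ ![1, 0] = v
    ext i; fin_cases i <;> simp
  have hP1 : P.val *ᵥ ![0, 1] = w := by
    change !![v 0, w 0; v 1, w 1] *ᵥ ![0, 1] = w
    ext i; fin_cases i <;> simp
  have inv_mulVec : ∀ (T : GL (Fin 2) (ZMod p)) (x y : Fin 2 → ZMod p), T.val *ᵥ x = y →
      (T⁻¹).val *ᵥ y = x := by
    rintro T x _ rfl
    rw [mulVec_mulVec, ← Units.val_mul, inv_mul_cancel, Units.val_one, one_mulVec]
  let H' := H.comap (MulAut.conj P).toMonoidHom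
  have hmem : ∀ T ∈ H, P⁻¹ * T * P ∈ H' := by
    intro T hT
    simpa [H', mul_assoc] using hT
  have htrace : ∀ T : GL (Fin 2) (ZMod p), ∀ Q : GL (Fin 2) (ZMod p),
      (Q⁻¹ * T * Q).val.trace = T.val.trace := by
    intro T Q
    rw [Units.val_mul, Units.val_mul, trace_mul_cycle, ← Units.val_mul, mul_inv_cancel]
    simp
  have hscc : ∀ T : GL (Fin 2) (ZMod p), IsScal T.val → T ∈ H' := by
    intro T hT
    refine hH _ ?_
    have := (isScal_conj_iff P⁻¹ T).2 hT
    simpa using this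
  have key := mem_of_det_eq_one_aux H' hscc (hmem γ hγ)
    (hmem (g * γ * g⁻¹) (H.mul_mem (H.mul_mem hg hγ) (H.inv_mem hg))) hμ0 (by
      rw [Units.val_mul, Units.val_mul, ← mulVec_mulVec, ← mulVec_mulVec, hP0, hγv, mulVec_smul,
        inv_mulVec _ _ _ hP0]) (by rw [htrace, hμ])
    (by rwa [isScal_conj_iff]) (by
      rw [Units.val_mul, Units.val_mul, ← mulVec_mulVec, ← mulVec_mulVec, hP1, Units.val_mul,
        Units.val_mul, ← mulVec_mulVec, ← mulVec_mulVec, inv_mulVec _ _ _ hw.symm, hγv,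
        mulVec_smul, ← hw, mulVec_smul, inv_mulVec _ _ _ hP1])
    (by rw [htrace, ← hμ]; simpa using htrace γ g⁻¹)
    (by rw [isScal_conj_iff]; simpa using (isScal_conj_iff g⁻¹ γ).not.2 hsc)
    (P⁻¹ * S * P) (by
      rw [Units.val_mul, Units.val_mul, det_mul, det_mul, hS, mul_one, ← det_mul, ← Units.val_mul,
        inv_mul_cancel, Units.val_one, det_one])
  simpa [H', mul_assoc] using key

end Parabolic

/-! ### Passage to `PGL₂(p)` -/

section Projective

variable {p : ℕ} [Fact p.Prime]

lemma mk_center_eq_one {A : GL (Fin 2) (ZMod p)} (h : IsScal A.val) :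
    QuotientGroup.mk' (Subgroup.center (GL (Fin 2) (ZMod p))) A = 1 := by
  rw [QuotientGroup.mk'_apply, QuotientGroup.eq_one_iff,
    GeneralLinearGroup.mem_center_iff_val_mem_range_scalar]
  obtain ⟨h1, h2, h3⟩ := h
  refine ⟨A.val 0 0, ?_⟩
  ext i j; fin_cases i <;> fin_cases j <;> simp [h1, h2, h3]

/-- A matrix whose determinant is a square is a scalar multiple of a matrix in `SL₂(p)`. -/
lemma exists_toGL_of_isSquare_det (h : GL (Fin 2) (ZMod p)) (hs : IsSquare h.val.det) :
    ∃ S : SpecialLinearGroup (Fin 2) (ZMod p),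
      QuotientGroup.mk' (Subgroup.center (GL (Fin 2) (ZMod p))) (SpecialLinearGroup.toGL S) =
        QuotientGroup.mk' (Subgroup.center (GL (Fin 2) (ZMod p))) h := by
  obtain ⟨s, hs⟩ := hs
  have hdet : h.val.det ≠ 0 := by
    have := (h.isUnit.map detMonoidHom).ne_zero
    simpa using this
  have hs0 : s ≠ 0 := by
    rintro rfl
    exact hdet (by simpa using hs)
  obtain ⟨u, hu⟩ : ∃ u : (ZMod p)ˣ, (u : ZMod p) * s = 1 :=
    ⟨(Units.mk0 s hs0)⁻¹, by simp [hs0]⟩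
  let c := GeneralLinearGroup.scalar (Fin 2) u
  have hcv : c.val = Matrix.scalar (Fin 2) (u : ZMod p) := rfl
  have hd : (c * h).val.det = 1 := by
    rw [Units.val_mul, det_mul, hs, hcv, det_fin_two]
    simp
    linear_combination ((u : ZMod p) * s + 1) * hu
  refine ⟨⟨(c * h).val, hd⟩, ?_⟩
  have : SpecialLinearGroup.toGL ⟨(c * h).val, hd⟩ = c * h := by ext1; rfl
  rw [this, map_mul, mk_center_eq_one, one_mul]
  rw [hcv]
  simp [IsScal]

/-- A subgroup of `PGL₂(p)` containing `PSL₂(p)` is `PSL₂(p)` or `PGL₂(p)`. -/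
lemma map_eq_or_eq_top (Γ : Subgroup (GL (Fin 2) (ZMod p)))
    (hΓ : ∀ S : GL (Fin 2) (ZMod p), S.val.det = 1 →
      S ∈ (Γ.map (QuotientGroup.mk' (Subgroup.center (GL (Fin 2) (ZMod p))))).comap
        (QuotientGroup.mk' (Subgroup.center (GL (Fin 2) (ZMod p))))) :
    Γ.map (QuotientGroup.mk' (Subgroup.center (GL (Fin 2) (ZMod p)))) =
      Subgroup.map (QuotientGroup.mk' (Subgroup.center (GL (Fin 2) (ZMod p))))
        (Matrix.SpecialLinearGroup.toGL (n := Fin 2) (R := ZMod p)).range ∨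
    Γ.map (QuotientGroup.mk' (Subgroup.center (GL (Fin 2) (ZMod p)))) = ⊤ := by
  set π := QuotientGroup.mk' (Subgroup.center (GL (Fin 2) (ZMod p)))
  have hsq : ∀ h : GL (Fin 2) (ZMod p), IsSquare h.val.det → π h ∈ Γ.map π := by
    intro h hs
    obtain ⟨S, hS⟩ := exists_toGL_of_isSquare_det h hs
    rw [← hS]
    exact hΓ _ S.det_coe
  have hdet : ∀ h : GL (Fin 2) (ZMod p), h.val.det ≠ 0 := by
    intro h
    have := (h.isUnit.map detMonoidHom).ne_zero
    simpa using this
  by_cases hall : ∀ γ ∈ Γ, IsSquare γ.val.det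
  · left
    apply le_antisymm
    · rintro _ ⟨γ, hγ, rfl⟩
      obtain ⟨S, hS⟩ := exists_toGL_of_isSquare_det γ (hall γ hγ)
      exact ⟨_, ⟨S, rfl⟩, hS⟩
    · rintro _ ⟨_, ⟨S, rfl⟩, rfl⟩
      exact hΓ _ S.det_coe
  · right
    push Not at hall
    obtain ⟨γ, hγ, hns⟩ := hall
    rw [eq_top_iff]
    intro x _
    obtain ⟨h, rfl⟩ := QuotientGroup.mk'_surjective _ x
    by_cases hs : IsSquare h.val.det
    · exact hsq h hs
    · have hprod : IsSquare (γ * h).val.det := by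
        rw [Units.val_mul, det_mul, ← quadraticChar_one_iff_isSquare
          (mul_ne_zero (hdet γ) (hdet h)), map_mul,
          quadraticChar_neg_one_iff_not_isSquare.2 hns,
          quadraticChar_neg_one_iff_not_isSquare.2 hs]
        norm_num
      have h1 := hsq _ hprod
      rw [map_mul] at h1
      have h2 : π γ ∈ Γ.map π := ⟨γ, hγ, rfl⟩
      exact ((Γ.map π).mul_mem_cancel_left h2).1 h1

end Projective

/-! ### The braid matrices -/

section Braid

/-- The first and third braid matrices have no common eigenvector. -/
lemma no_common_eigenvector {K : Type*} [Field K] {x y z : K} (hy : y ≠ 0)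
    (hx1 : x ≠ 1) (hy1 : y ≠ 1) (hz1 : z ≠ 1) (hxyz : x * y * z ≠ 1)
    {v : Fin 2 → K} (hv : v ≠ 0)
    (h1 : ∃ c : K, !![y, -1 + z; y * (-1 + y), 1 - y + y * z] *ᵥ v = c • v)
    (h3 : ∃ c : K, !![1, x * (1 - z); 0, x * y] *ᵥ v = c • v) : False := by
  obtain ⟨c, h1⟩ := h1
  obtain ⟨d, h3⟩ := h3
  have e1 : area v (!![y, -1 + z; y * (-1 + y), 1 - y + y * z] *ᵥ v) = 0 := by rw [h1]; simp
  have e3 : area v (!![1, x * (1 - z); 0, x * y] *ᵥ v) = 0 := by rw [h3]; simp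
  simp only [area, mulVec_fin_two, of_apply, cons_val', cons_val_zero, cons_val_one,
    cons_val_fin_one] at e1 e3
  have e3' : v 1 * ((x * y - 1) * v 0 - x * (1 - z) * v 1) = 0 := by linear_combination e3
  rcases mul_eq_zero.1 e3' with h | h
  · rw [h] at e1
    have h0 : v 0 ≠ 0 := fun h0 => hv (by ext i; fin_cases i <;> simpa)
    have : v 0 * v 0 * y * (y - 1) = 0 := by linear_combination e1
    simp [h0, hy, sub_eq_zero, hy1] at this
  · have : v 1 * v 1 * (1 - z) * (1 - x) * (1 - x * y * z) = 0 := by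
      linear_combination (x * y - 1) ^ 2 * e1 -
        (y * (y - 1) * ((x * y - 1) * v 0 + x * (1 - z) * v 1) +
          (1 - 2 * y + y * z) * (x * y - 1) * v 1) * h
    have hv1 : v 1 ≠ 0 := by
      intro h1
      rw [h1] at h e1
      have h0 : v 0 ≠ 0 := fun h0 => hv (by ext i; fin_cases i <;> simpa)
      have : v 0 * v 0 * y * (y - 1) = 0 := by linear_combination e1
      simp [h0, hy, sub_eq_zero, hy1] at this
    simp [hv1, sub_eq_zero, hx1.symm, hz1.symm, hxyz.symm] at this

variable {p : ℕ} [Fact p.Prime] {x y z : ZMod p}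

lemma trace_matB2 : (MatB2 p x y z).trace = 1 + x * z := by
  rw [MatB2, trace_fin_two]
  simp only [of_apply, cons_val', cons_val_zero, cons_val_one, cons_val_fin_one]
  ring

lemma det_matB2 (hy : y ≠ 0) : (MatB2 p x y z).det = x * z := by
  rw [MatB2, det_fin_two_of]
  field_simp
  ring

lemma isScal_matB_mul (hy : y ≠ 0) : IsScal (MatB1 p y z * MatB2 p x y z * MatB3 p x y z) := by
  rw [MatB1, MatB2, MatB3, mul_fin_two, mul_fin_two]
  refine ⟨?_, ?_, ?_⟩ <;>
    simp only [of_apply, cons_val', cons_val_zero, cons_val_one, cons_val_fin_one] <;>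
    field_simp <;> ring

lemma not_isScal_matB1 (hy : y ≠ 0) (hy1 : y ≠ 1) : ¬ IsScal (MatB1 p y z) := by
  rintro ⟨-, h, -⟩
  have : y * (-1 + y) = 0 := h
  rcases mul_eq_zero.1 this with h | h
  · exact hy h
  · exact hy1 (by linear_combination h)

lemma not_isScal_matB2 (hx : x ≠ 0) (hy : y ≠ 0) (hy1 : y ≠ 1) : ¬ IsScal (MatB2 p x y z) := by
  rintro ⟨-, h, -⟩
  have : x * y * (1 - y) = 0 := h
  rcases mul_eq_zero.1 this with h | h
  · exact mul_ne_zero hx hy h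
  · exact hy1 (by linear_combination -h)

lemma not_isScal_matB3 (hx : x ≠ 0) (hz1 : z ≠ 1) : ¬ IsScal (MatB3 p x y z) := by
  rintro ⟨h, -, -⟩
  have : x * (1 - z) = 0 := h
  rcases mul_eq_zero.1 this with h | h
  · exact hx h
  · exact hz1 (by linear_combination -h)

/-- If `x * y * z * w = 1`, two products equal to `-1` sharing the factor `z` put `(x, y, z, w)` in
the shape `(x, x, z, z)` with `x * z = -1`. -/
lemma eq_and_eq_of_mul_eq_neg_one {R : Type*} [CommRing R] {x y z w : Rˣ} (h1 : y * z = -1)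
    (h2 : x * z = -1) (h : x * y * z * w = 1) : x = y ∧ z = w := by
  refine ⟨mul_right_cancel (h2.trans h1.symm), ?_⟩
  have : y * w = -1 := by
    have : x * z * (y * w) = 1 := by rw [← h]; ac_rfl
    rw [h2, neg_one_mul] at this
    rw [← this, neg_neg]
  exact mul_left_cancel (h1.trans this.symm)

end Braid

/-- if the type `a` is exceptional (the image of `Γ` in `PGL₂(𝔽_p)` is neither
`PSL₂(p)` nor `PGL₂(p)`) and `a` is not a permutation of `(a, a, m/2 - a, m/2 - a)` type,
then the order of `ζ_i ζ_j` is `2`, `3`, `4` or `5` for all `i ≠ j`. -/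
theorem stmt1 (p m : ℕ) (hp : p.Prime) [Fact p.Prime] (hp5 : 5 < p)
    (hm1 : 1 < m) (hmd : m ∣ p - 1)
    (ζ : (ZMod p)ˣ) (hζ : orderOf ζ = m)
    (a : Fin 4 → ℕ) (hpos : ∀ i, 0 < a i) (hlt : ∀ i, a i < m)
    (hsum : (a 0 + a 1 + a 2 + a 3) % m = 0)
    (g1 g2 g3 : GL (Fin 2) (ZMod p))
    (hg1 : (g1 : Matrix (Fin 2) (Fin 2) (ZMod p)) =
      MatB1 p ((ζ ^ a 1 : (ZMod p)ˣ) : ZMod p) ((ζ ^ a 2 : (ZMod p)ˣ) : ZMod p))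
    (hg2 : (g2 : Matrix (Fin 2) (Fin 2) (ZMod p)) =
      MatB2 p ((ζ ^ a 0 : (ZMod p)ˣ) : ZMod p) ((ζ ^ a 1 : (ZMod p)ˣ) : ZMod p)
        ((ζ ^ a 2 : (ZMod p)ˣ) : ZMod p))
    (hg3 : (g3 : Matrix (Fin 2) (Fin 2) (ZMod p)) =
      MatB3 p ((ζ ^ a 0 : (ZMod p)ˣ) : ZMod p) ((ζ ^ a 1 : (ZMod p)ˣ) : ZMod p)
        ((ζ ^ a 2 : (ZMod p)ˣ) : ZMod p))
    -- `a` is exceptional: the image of `Γ` in `PGL₂(p) = GL₂(p)/center` is neither the image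
    -- of `SL₂(p)` nor all of `PGL₂(p)`
    (hexc1 : Subgroup.map (QuotientGroup.mk' (Subgroup.center (GL (Fin 2) (ZMod p))))
        (Subgroup.closure {g1, g2, g3}) ≠
      Subgroup.map (QuotientGroup.mk' (Subgroup.center (GL (Fin 2) (ZMod p))))
        (Matrix.SpecialLinearGroup.toGL (n := Fin 2) (R := ZMod p)).range)
    (hexc2 : Subgroup.map (QuotientGroup.mk' (Subgroup.center (GL (Fin 2) (ZMod p))))
        (Subgroup.closure {g1, g2, g3}) ≠ ⊤)
    -- no permutation of `a` is of the form `(b, b, m/2 - b + ..., ...)`: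
    (hperm : ∀ σ : Equiv.Perm (Fin 4),
      ¬ (a (σ 0) = a (σ 1) ∧ a (σ 2) = a (σ 3) ∧
        (2 * (a (σ 0) + a (σ 2))) % (2 * m) = m % (2 * m))) :
    ∀ i j : Fin 4, i ≠ j →
      orderOf ((ζ ^ a i) * (ζ ^ a j) : (ZMod p)ˣ) ∈ ({2, 3, 4, 5} : Set ℕ) := by
  intro i j hij
  set z : Fin 4 → (ZMod p)ˣ := fun i => ζ ^ a i with hz
  have hz1 : ∀ i, z i ≠ 1 := by
    intro i h
    have := Nat.le_of_dvd (hpos i) (orderOf_dvd_of_pow_eq_one h)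
    have := hlt i
    omega
  have hprod : z 0 * z 1 * z 2 * z 3 = 1 := by
    simp only [hz, ← pow_add]
    exact orderOf_dvd_iff_pow_eq_one.1 (hζ ▸ Nat.dvd_of_mod_eq_zero hsum)
  have h2 : (2 : ZMod p) ≠ 0 := by
    intro h
    have := (ZMod.natCast_eq_zero_iff 2 p).1 (by exact_mod_cast h)
    have := Nat.le_of_dvd (by norm_num) this
    omega
  have hneg : (-1 : (ZMod p)ˣ) ≠ 1 := by
    intro h
    have h' := congrArg Units.val h
    push_cast at h'
    exact h2 (by linear_combination -h')
  -- the excluded types, in multiplicative form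
  have hexcl : ∀ σ : Equiv.Perm (Fin 4), z (σ 0) = z (σ 1) → z (σ 2) = z (σ 3) →
      z (σ 0) * z (σ 2) ≠ -1 := by
    have hinj : ∀ i j, z i = z j → a i = a j := by
      intro i j h
      have := pow_eq_pow_iff_modEq.1 h
      rw [hζ] at this
      exact Nat.ModEq.eq_of_lt_of_lt this (hlt i) (hlt j)
    intro σ h01 h23 hm
    refine hperm σ ⟨hinj _ _ h01, hinj _ _ h23, ?_⟩
    simp only [hz, ← pow_add] at hm
    generalize a (σ 0) + a (σ 2) = s at hm
    have : ζ ^ (2 * s) = 1 := by rw [mul_comm, pow_mul, hm]; simp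
    obtain ⟨k, hk⟩ := orderOf_dvd_of_pow_eq_one this
    rw [hζ] at hk
    rcases Nat.even_or_odd' k with ⟨r, rfl | rfl⟩
    · have : s = m * r := by linarith
      rw [this, pow_mul, ← hζ, pow_orderOf_eq_one, one_pow] at hm
      exact absurd hm.symm hneg
    · rw [hk, show m * (2 * r + 1) = m + 2 * m * r by ring, Nat.add_mul_mod_self_left]
  let B : Fin 3 → GL (Fin 2) (ZMod p) := ![g1, g2, g3]
  let l : Fin 3 → (ZMod p)ˣ := ![z 1 * z 2, z 0 * z 2, z 0 * z 1]
  set Γ := Subgroup.closure {g1, g2, g3} with hΓ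
  have hB : ∀ i, B i ∈ Γ := by
    intro i
    apply Subgroup.subset_closure
    fin_cases i <;> simp [B]
  change g1.val = MatB1 p (z 1).val (z 2).val at hg1
  change g2.val = MatB2 p (z 0).val (z 1).val (z 2).val at hg2
  change g3.val = MatB3 p (z 0).val (z 1).val (z 2).val at hg3
  have hv1 : ∀ i, (z i).val ≠ 1 := fun i h => hz1 i (Units.ext h)
  have hv0 : ∀ i, (z i).val ≠ 0 := fun i => (z i).ne_zero
  have h123 : (z 0).val * (z 1).val * (z 2).val ≠ 1 := by
    intro h
    apply hz1 3
    have : z 0 * z 1 * z 2 = 1 := Units.ext (by push_cast; exact h)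
    rwa [this, one_mul] at hprod
  have htr : ∀ i, (B i).val.trace = 1 + l i := by
    intro i
    fin_cases i
    · change g1.val.trace = 1 + ((z 1 * z 2 : (ZMod p)ˣ) : ZMod p)
      rw [hg1, MatB1, trace_fin_two_of, Units.val_mul]
      ring
    · change g2.val.trace = 1 + ((z 0 * z 2 : (ZMod p)ˣ) : ZMod p)
      rw [hg2, trace_matB2, Units.val_mul]
    · change g3.val.trace = 1 + ((z 0 * z 1 : (ZMod p)ˣ) : ZMod p)
      rw [hg3, MatB3, trace_fin_two_of, Units.val_mul]
  have hdet : ∀ i, (B i).val.det = l i := by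
    intro i
    fin_cases i
    · change g1.val.det = ((z 1 * z 2 : (ZMod p)ˣ) : ZMod p)
      rw [hg1, MatB1, det_fin_two_of, Units.val_mul]
      ring
    · change g2.val.det = ((z 0 * z 2 : (ZMod p)ˣ) : ZMod p)
      rw [hg2, det_matB2 (hv0 1), Units.val_mul]
    · change g3.val.det = ((z 0 * z 1 : (ZMod p)ˣ) : ZMod p)
      rw [hg3, MatB3, det_fin_two_of, Units.val_mul]
      ring
  have hnsc : ∀ i, ¬ IsScal (B i).val := by
    intro i
    fin_cases i
    · change ¬ IsScal g1.val
      exact hg1 ▸ not_isScal_matB1 (hv0 1) (hv1 1)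
    · change ¬ IsScal g2.val
      exact hg2 ▸ not_isScal_matB2 (hv0 0) (hv0 1) (hv1 1)
    · change ¬ IsScal g3.val
      exact hg3 ▸ not_isScal_matB3 (hv0 0) (hv1 2)
  have hscal : IsScal (B 0 * B 1 * B 2).val := by
    change IsScal (g1 * g2 * g3).val
    rw [Units.val_mul, Units.val_mul, hg1, hg2, hg3]
    exact isScal_matB_mul (hv0 1)
  -- `Γ` contains no parabolic element
  have hpar : ∀ γ ∈ Γ, ¬ IsScal γ.val → γ.val.trace ^ 2 ≠ 4 * γ.val.det := by
    intro γ hγ hsc hdisc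
    have := map_eq_or_eq_top Γ (mem_of_det_eq_one h2 _ ?_ ?_ ⟨γ, hγ, rfl⟩ hsc hdisc)
    · exact this.elim hexc1 hexc2
    · intro A hA
      rw [Subgroup.mem_comap, mk_center_eq_one hA]
      exact one_mem _
    · intro v hv
      by_contra! hcon
      refine no_common_eigenvector (hv0 1) (hv1 0) (hv1 1) (hv1 2) h123 hv ?_ ?_
      · rw [← MatB1, ← hg1]
        exact hcon g1 ⟨g1, hB 0, rfl⟩
      · rw [← MatB3, ← hg3]
        exact hcon g3 ⟨g3, hB 2, rfl⟩
  have hl1 : ∀ i, l i ≠ 1 := by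
    intro i h
    refine hpar _ (hB i) (hnsc i) ?_
    rw [htr, hdet, h]
    norm_num
  have hl6 : ∀ i, orderOf (l i) < 6 := by
    intro i
    by_contra! h6
    let K := AlgebraicClosure (ZMod p)
    let f := algebraMap (ZMod p) K
    have hf : Function.Injective f := f.injective
    let F := GeneralLinearGroup.map (n := Fin 2) f
    have hFv : ∀ A, (F A).val = A.val.map f := fun A => rfl
    have hFtr : ∀ A, (F A).val.trace = f A.val.trace := fun A => by
      rw [hFv, trace_fin_two, trace_fin_two]; simp
    have hFdet : ∀ A, (F A).val.det = f A.val.det := fun A => by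
      rw [hFv, det_fin_two, det_fin_two]; simp
    have hFsc : ∀ A, IsScal A.val → IsScal (F A).val := by
      rintro A ⟨h1, h2, h3⟩
      simp [IsScal, hFv, h1, h2, h3]
    have hf2 : (2 : K) ≠ 0 := by
      rw [← map_ofNat f 2]
      exact (map_ne_zero f).2 h2
    have : Finite (Γ.map F) := Finite.of_surjective (F.subgroupMap Γ) (F.subgroupMap_surjective Γ)
    have hu : Function.Injective (Units.map f.toMonoidHom) := Units.map_injective hf
    obtain ⟨i, j, hij, hi, hj⟩ := exists_two_reflections hf2 (Γ.map F) (by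
        rintro _ ⟨γ, hγ, rfl⟩ hsc
        rw [hFtr, hFdet]
        intro h
        refine hpar γ hγ (fun h => hsc (hFsc _ h)) (hf ?_)
        rw [map_pow, map_mul, map_ofNat]
        exact h)
      (fun i => F (B i)) (fun i => ⟨B i, hB i, rfl⟩) (fun i => Units.map f.toMonoidHom (l i))
      (fun i => by rw [hFtr, htr]; simp) (fun i => by rw [hFdet, hdet]; simp)
      (by simpa only [map_mul] using hFsc _ hscal) (by
        intro v hv h
        refine no_common_eigenvector ((map_ne_zero f).2 (hv0 1))
          ((map_ne_one_iff f hf).2 (hv1 0)) ((map_ne_one_iff f hf).2 (hv1 1))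
          ((map_ne_one_iff f hf).2 (hv1 2)) ?_ hv ?_ ?_
        · rw [← map_mul, ← map_mul]
          exact (map_ne_one_iff f hf).2 h123
        · convert h 0 using 4
          change _ = g1.val.map f
          rw [hg1, MatB1]
          ext i j; fin_cases i <;> fin_cases j <;> simp
        · convert h 2 using 4
          change _ = g3.val.map f
          rw [hg3, MatB3]
          ext i j; fin_cases i <;> fin_cases j <;> simp)
      i (by rwa [orderOf_injective _ hu])
    have hm1 : Units.map f.toMonoidHom (-1) = -1 := by ext; simp
    rw [← hm1] at hi hj
    have hi := hu hi
    have hj := hu hj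
    -- two of the products equal to `-1` force `z` to be of excluded type
    have h01 : ¬ (l 0 = -1 ∧ l 1 = -1) := by
      rintro ⟨h, h'⟩
      obtain ⟨e, e'⟩ := eq_and_eq_of_mul_eq_neg_one (x := z 0) (y := z 1) (z := z 2) (w := z 3)
        h h' hprod
      exact hexcl 1 e e' h'
    have h02 : ¬ (l 0 = -1 ∧ l 2 = -1) := by
      rintro ⟨h, h'⟩
      obtain ⟨e, e'⟩ := eq_and_eq_of_mul_eq_neg_one (x := z 0) (y := z 2) (z := z 1) (w := z 3)
        (by rw [mul_comm]; exact h) h' (by rw [← hprod]; ac_rfl)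
      exact hexcl (Equiv.swap 1 2) e e' h'
    have h12 : ¬ (l 1 = -1 ∧ l 2 = -1) := by
      rintro ⟨h, h'⟩
      have h' : z 1 * z 0 = -1 := by rw [mul_comm]; exact h'
      obtain ⟨e, e'⟩ := eq_and_eq_of_mul_eq_neg_one (x := z 1) (y := z 2) (z := z 0) (w := z 3)
        (by rw [mul_comm]; exact h) h' (by rw [← hprod]; ac_rfl)
      exact hexcl ⟨![1, 2, 0, 3], ![2, 0, 1, 3], by decide, by decide⟩ e e' h'
    fin_cases i <;> fin_cases j
    · exact hij rfl
    · exact h01 ⟨hi, hj⟩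
    · exact h02 ⟨hi, hj⟩
    · exact h01 ⟨hj, hi⟩
    · exact hij rfl
    · exact h12 ⟨hi, hj⟩
    · exact h02 ⟨hj, hi⟩
    · exact h12 ⟨hj, hi⟩
    · exact hij rfl
  have hmem : ∀ i, orderOf (l i) ∈ ({2, 3, 4, 5} : Set ℕ) := by
    intro i
    have h6 := hl6 i
    have h0 := orderOf_pos (l i)
    have h1 : orderOf (l i) ≠ 1 := fun h => hl1 i (orderOf_eq_one_iff.1 h)
    simp only [Set.mem_insert_iff, Set.mem_singleton_iff]
    omega
  have p12 : orderOf (z 1 * z 2) ∈ ({2, 3, 4, 5} : Set ℕ) := hmem 0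
  have p02 : orderOf (z 0 * z 2) ∈ ({2, 3, 4, 5} : Set ℕ) := hmem 1
  have p01 : orderOf (z 0 * z 1) ∈ ({2, 3, 4, 5} : Set ℕ) := hmem 2
  have p03 : orderOf (z 0 * z 3) ∈ ({2, 3, 4, 5} : Set ℕ) := by
    rwa [eq_inv_of_mul_eq_one_left (a := z 0 * z 3) (b := z 1 * z 2) (by rw [← hprod]; ac_rfl),
      orderOf_inv]
  have p13 : orderOf (z 1 * z 3) ∈ ({2, 3, 4, 5} : Set ℕ) := by
    rwa [eq_inv_of_mul_eq_one_left (a := z 1 * z 3) (b := z 0 * z 2) (by rw [← hprod]; ac_rfl),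
      orderOf_inv]
  have p23 : orderOf (z 2 * z 3) ∈ ({2, 3, 4, 5} : Set ℕ) := by
    rwa [eq_inv_of_mul_eq_one_left (a := z 2 * z 3) (b := z 0 * z 1) (by rw [← hprod]; ac_rfl),
      orderOf_inv]
  change orderOf (z i * z j) ∈ _
  fin_cases i <;> fin_cases j <;>
    first
    | exact absurd rfl hij
    | assumption
    | (rw [mul_comm]; assumption)
end

section
/- Let a* = (m−a1, m−a2, m−a3, m−a4) be the dual type and let d = gcd(m, a1+a3, a2+a3). Assume m > 2, d is even and d ≠ m. Let k be an algebraically closed field of characteristic p and regard Φ_a and Φ_{a*} as elements of the rational function field k(t). Then the rational function Φ_a(t)^{1+m/d} · Φ_{a*}(t)^{1−m/d} is the square of an element g of k(t). -/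
/-!
The Hasse invariant `Φ_a` is, up to sign, a truncation of the hypergeometric series
`F(a3/m, 1 - a4/m; (a2+a3)/m)` modulo `p`. Put `q = p - 1`, `A = α a2*`, `B = α a4*`, `N = α a3`.
Passing to the dual type replaces `(A, B, N)` by `(q - A, q - B, q - N)`, and Euler's transformation
`F(c-a, c-b; c) = (1-t)^(a+b-c) F(a, b; c)` holds for these polynomials, giving
`Φ_{a*} = const · t^(A-N) (1-t)^(q-A-B) Φ_a` (with a nonzero constant, negative exponents
being moved to the other side). Euler's transformation (`hyp_euler`) is a statement about solutions
of the hypergeometric equation; a polynomial solution of small enough degree is determined by its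
constant term (`hyp_unique`), because the recursion for the coefficients is not singular in that
range.

Since `A - N = α (m - (a2+a3))` and `q - A - B = α (m - (a1+a3))` are even when `d` is, and
constants are squares in `k`, this reads `Φ_a = h^2 Φ_{a*}` in `k(t)`. Hence
`Φ_a^(1+r) Φ_{a*}^(1-r) = (h^(1+r) Φ_{a*})^2` for `r = m/d`.
-/

open Polynomial

/-- The `a`-Hasse invariant `Φ_a ∈ 𝔽_p[λ]` of a type `a = (a1, a2, a3, a4)` in the mixed case:
`Φ_a(λ) = (-1)^(α a3) ∑_{i+j = α a3} C(α a2*, i) C(α a4*, j) λ^j` where `α = (p-1)/m` and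
`a_i* = m - a_i`. -/
noncomputable def HasseInv (p m a2 a3 a4 : ℕ) : Polynomial (ZMod p) :=
  let α := (p - 1) / m
  C ((-1 : ZMod p) ^ (α * a3)) *
    ∑ j ∈ Finset.range (α * a3 + 1),
      C ((Nat.choose (α * (m - a2)) (α * a3 - j) * Nat.choose (α * (m - a4)) j : ℕ) : ZMod p) *
        X ^ j

/-! ### The hypergeometric equation -/

/-- The polynomial `y` solves the hypergeometric equation
`x(1-x)y'' + (c - (a+b+1)x)y' - ab y = 0`. -/
def Hyp {F : Type*} [Field F] (a b c : F) (y : F[X]) : Prop :=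
  X * (1 - X) * derivative (derivative y) + (C c - C (a + b + 1) * X) * derivative y
    - C (a * b) * y = 0

lemma hyp_iff {F : Type*} [Field F] (a b c : F) (y : F[X]) :
    Hyp a b c y ↔
      ∀ n : ℕ, ((n : F) + 1) * (n + c) * y.coeff (n + 1) = (n + a) * (n + b) * y.coeff n := by
  have key : X * (1 - X) * derivative (derivative y)
      + (C c - C (a + b + 1) * X) * derivative y - C (a * b) * y
      = X * derivative (derivative y) - X * (X * derivative (derivative y))
        + C c * derivative y - C (a + b + 1) * (X * derivative y) - C (a * b) * y := by ring
  rw [Hyp, key, Polynomial.ext_iff]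
  refine forall_congr' fun n => ?_
  rw [← sub_eq_zero (a := ((n : F) + 1) * (n + c) * y.coeff (n + 1))]
  rcases n with _ | _ | n <;>
  · simp only [coeff_sub, coeff_add, coeff_C_mul, coeff_X_mul, coeff_X_mul_zero, coeff_derivative,
      coeff_zero]
    push_cast
    refine Eq.congr ?_ rfl
    ring

/-- Euler's transformation: multiplying a solution with parameters `(a, b, c)` by
`(1-x)^(a+b-c)` gives a solution with parameters `(c-a, c-b, c)`. -/
lemma hyp_euler {F : Type*} [Field F] (a b c : F) (y : F[X]) (s : ℕ) (hs : (s : F) = a + b - c)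
    (h : Hyp a b c y) : Hyp (c - a) (c - b) c ((1 - X) ^ s * y) := by
  obtain rfl : c = a + b - s := by rw [hs]; ring
  -- Multiplying by `1 - X` avoids the truncated exponent `s - 1` in the derivative of `(1-X)^s`.
  have hd : ∀ (z : F[X]), (1 - X) * derivative ((1 - X) ^ s * z)
      = (1 - X) ^ s * ((1 - X) * derivative z - C (s : F) * z) := by
    intro z
    rcases s with _ | s
    · simp
    · simp only [derivative_mul, derivative_pow, derivative_sub, derivative_one, derivative_X,
        Nat.add_sub_cancel]
      ring
  have h1 := hd y
  have h2 := hd ((1 - X) * derivative y - C (s : F) * y)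
  rw [← h1] at h2
  have hx : (1 - X : F[X]) ≠ 0 := by
    intro h0
    simpa using congrArg (fun P : F[X] => P.coeff 0) h0
  unfold Hyp at h ⊢
  generalize hw : (1 - X) ^ s * y = w at h1 h2 ⊢
  simp only [derivative_mul, derivative_sub, derivative_one, derivative_X, derivative_C] at h2
  simp only [map_add, map_sub, map_mul, map_one] at h h1 h2 ⊢
  apply mul_left_cancel₀ hx
  rw [← hw] at *
  generalize derivative ((1 - X) ^ s * y) = z1 at *
  linear_combination X * h2 + (X + C a + C b - C (s : F)
    - (C a + C b - C (s : F) - C a + (C a + C b - C (s : F) - C b) + 1) * X) * h1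
    + (1 - X) ^ s * (1 - X) * h

/-- The recursion `(n+1)(n+e+1) y_{n+1} = (n+a)(n+b) y_n` is nonsingular modulo `p` for
`n + e + 1 < p`. -/
lemma hyp_unique {p : ℕ} [Fact p.Prime] (a b : ZMod p) (e : ℕ) (y z : (ZMod p)[X])
    (hy : Hyp a b (e + 1) y) (hz : Hyp a b (e + 1) z)
    (dy : y.natDegree + e < p) (dz : z.natDegree + e < p) :
    C (z.coeff 0) * y = C (y.coeff 0) * z := by
  rw [hyp_iff] at hy hz
  ext n
  rw [coeff_C_mul, coeff_C_mul]
  by_cases hn : n + e < p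
  · induction n with
    | zero => ring
    | succ n ih =>
      have ih := ih (by omega)
      have hy := hy n
      have hz := hz n
      have hne : ((n : ZMod p) + 1) * (n + (e + 1)) ≠ 0 := by
        have h1 : ((n + 1 : ℕ) : ZMod p) ≠ 0 := by
          rw [Ne, ZMod.natCast_eq_zero_iff]
          exact Nat.not_dvd_of_pos_of_lt (by omega) (by omega)
        have h2 : ((n + (e + 1) : ℕ) : ZMod p) ≠ 0 := by
          rw [Ne, ZMod.natCast_eq_zero_iff]
          exact Nat.not_dvd_of_pos_of_lt (by omega) (by omega)
        push_cast at h1 h2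
        exact mul_ne_zero h1 h2
      apply mul_left_cancel₀ hne
      linear_combination z.coeff 0 * hy - y.coeff 0 * hz + (n + a) * (n + b) * ih
  · rw [coeff_eq_zero_of_natDegree_lt (by omega : y.natDegree < n),
      coeff_eq_zero_of_natDegree_lt (by omega : z.natDegree < n)]
    ring

/-! ### Terminating hypergeometric series modulo `p` -/

/-- The terminating hypergeometric polynomial `∑ C(M, n+e) C(B, n) X^n`, proportional to
`F(e-M, -B; e+1)`. -/
noncomputable def hypPoly (p M B e : ℕ) : (ZMod p)[X] :=
  ∑ n ∈ Finset.range (B + 1), C ((M.choose (n + e) * B.choose n : ℕ) : ZMod p) * X ^ n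

lemma coeff_hypPoly (p M B e n : ℕ) :
    (hypPoly p M B e).coeff n = ((M.choose (n + e) * B.choose n : ℕ) : ZMod p) := by
  simp only [hypPoly, finsetSum_coeff, coeff_C_mul_X_pow, Finset.sum_ite_eq, Finset.mem_range]
  split_ifs with h
  · rfl
  · rw [Nat.choose_eq_zero_of_lt (by omega : B < n)]; simp

lemma natDegree_hypPoly_le (p M B e : ℕ) : (hypPoly p M B e).natDegree ≤ M - e := by
  rw [natDegree_le_iff_coeff_eq_zero]
  intro n hn
  rw [coeff_hypPoly, Nat.choose_eq_zero_of_lt (by omega)]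
  simp

lemma coeff_zero_hypPoly_ne {p : ℕ} [Fact p.Prime] (M B e : ℕ) (hM : M < p) (he : e ≤ M) :
    (hypPoly p M B e).coeff 0 ≠ 0 := by
  rw [coeff_hypPoly, Ne, ZMod.natCast_eq_zero_iff]
  simp only [zero_add, Nat.choose_zero_right, mul_one]
  intro h
  have h1 : p ∣ M.factorial := by
    rw [← Nat.choose_mul_factorial_mul_factorial he, mul_assoc]
    exact h.mul_right _
  rw [(Fact.out : p.Prime).dvd_factorial] at h1
  omega

lemma choose_succ_cast (R : Type*) [CommRing R] (B n : ℕ) :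
    ((n : R) + 1) * (B.choose (n + 1) : R) = (B - n) * (B.choose n : R) := by
  have h := Nat.choose_succ_right_eq B n
  rcases le_or_gt n B with hn | hn
  · have h2 := congrArg (Nat.cast : ℕ → R) h
    push_cast [Nat.cast_sub hn] at h2
    linear_combination h2
  · simp [Nat.choose_eq_zero_of_lt hn, Nat.choose_eq_zero_of_lt (by omega : B < n + 1)]

lemma hyp_hypPoly {p : ℕ} [Fact p.Prime] (M B e : ℕ) :
    Hyp ((e : ZMod p) - M) (-B) (e + 1) (hypPoly p M B e) := by
  rw [hyp_iff]
  intro n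
  rw [coeff_hypPoly, coeff_hypPoly, add_right_comm n 1 e]
  have h1 := choose_succ_cast (ZMod p) M (n + e)
  have h2 := choose_succ_cast (ZMod p) B n
  push_cast at h1 ⊢
  linear_combination ((n : ZMod p) + 1) * (B.choose (n + 1)) * h1
    + (M - (n + e)) * (M.choose (n + e)) * h2

/-- Euler's transformation for the truncated series modulo `p = M + B + s + 1`. -/
lemma euler_hypPoly {p : ℕ} [Fact p.Prime] (M B s e : ℕ) (hp : M + B + s + 1 = p) (he : e ≤ M) :
    ∃ c : ZMod p, c ≠ 0 ∧ (1 - X) ^ s * hypPoly p M B e = C c * hypPoly p (M + s) (B + s) e := by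
  have hz : (M + B + s + 1 : ZMod p) = 0 := by
    have := congrArg (Nat.cast : ℕ → ZMod p) hp
    rw [ZMod.natCast_self] at this
    exact_mod_cast this
  have h1 := hyp_euler _ _ _ _ s (by linear_combination hz) (hyp_hypPoly (p := p) M B e)
  have h2 := hyp_hypPoly (p := p) (M + s) (B + s) e
  -- The parameters agree modulo `p` after exchanging the first two.
  have ea : ((e : ZMod p) + 1 - (e - M)) = -((B + s : ℕ) : ZMod p) := by
    push_cast; linear_combination hz
  have eb : ((e : ZMod p) + 1 - (-B)) = e - ((M + s : ℕ) : ZMod p) := by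
    push_cast; linear_combination hz
  rw [ea, eb] at h1
  have h2' : Hyp (-((B + s : ℕ) : ZMod p)) (e - ((M + s : ℕ) : ZMod p)) (e + 1)
      (hypPoly p (M + s) (B + s) e) := by
    rw [hyp_iff] at h2 ⊢
    intro n
    rw [h2 n]; ring
  have d1 : ((1 - X) ^ s * hypPoly p M B e : (ZMod p)[X]).natDegree ≤ s + (M - e) := by
    refine natDegree_mul_le.trans (add_le_add ?_ (natDegree_hypPoly_le p M B e))
    refine natDegree_pow_le.trans ?_
    have : (1 - X : (ZMod p)[X]).natDegree ≤ 1 := by compute_degree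
    nlinarith
  have d2 := natDegree_hypPoly_le p (M + s) (B + s) e
  have hu := hyp_unique _ _ e _ _ h1 h2' (by omega) (by omega)
  have n1 := coeff_zero_hypPoly_ne (p := p) M B e (by omega) he
  have n2 := coeff_zero_hypPoly_ne (p := p) (M + s) (B + s) e (by omega) (by omega)
  have n3 : ((1 - X) ^ s * hypPoly p M B e : (ZMod p)[X]).coeff 0 = (hypPoly p M B e).coeff 0 := by
    simp [coeff_zero_eq_eval_zero]
  rw [n3] at hu
  refine ⟨(hypPoly p M B e).coeff 0 / (hypPoly p (M + s) (B + s) e).coeff 0,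
    div_ne_zero n1 n2, ?_⟩
  apply mul_left_cancel₀ (C_ne_zero.mpr n2)
  rw [hu, ← mul_assoc, ← C_mul, mul_div_cancel₀ _ n2]

/-! ### Hasse invariants as hypergeometric polynomials -/

/-- The sum defining the Hasse invariant, with `A = α a2*`, `B = α a4*`, `N = α a3`. -/
noncomputable def hasseSum (p A B N : ℕ) : (ZMod p)[X] :=
  ∑ j ∈ Finset.range (N + 1), C ((A.choose (N - j) * B.choose j : ℕ) : ZMod p) * X ^ j

lemma coeff_hasseSum (p A B N n : ℕ) : (hasseSum p A B N).coeff n =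
    if n < N + 1 then ((A.choose (N - n) * B.choose n : ℕ) : ZMod p) else 0 := by
  simp only [hasseSum, finsetSum_coeff, coeff_C_mul_X_pow, Finset.sum_ite_eq, Finset.mem_range]

lemma hasseSum_eq_hypPoly (p B N e : ℕ) : hasseSum p (N + e) B N = hypPoly p (N + e) B e := by
  ext n
  rw [coeff_hasseSum, coeff_hypPoly]
  split_ifs with h
  · rw [← Nat.choose_symm_of_eq_add (by omega : N + e = (N - n) + (n + e))]
  · rw [Nat.choose_eq_zero_of_lt (by omega : N + e < n + e)]; simp

lemma hasseSum_dual_eq (p A B e : ℕ) :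
    hasseSum p A B (A + e) = X ^ e * hypPoly p B A e := by
  ext n
  rw [coeff_hasseSum, coeff_X_pow_mul', coeff_hypPoly]
  by_cases h1 : e ≤ n
  · obtain ⟨n, rfl⟩ := Nat.exists_eq_add_of_le' h1
    rw [if_pos h1, Nat.add_sub_cancel]
    split_ifs with h
    · rw [mul_comm, Nat.choose_symm_of_eq_add (by omega : A = (A + e - (n + e)) + n)]
    · rw [Nat.choose_eq_zero_of_lt (by omega : A < n)]; simp
  · rw [if_neg h1, if_pos (by omega), Nat.choose_eq_zero_of_lt (by omega)]; simp

/-! ### Square classes in `k(t)` -/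

/-- The rational function over `k` attached to a polynomial over `𝔽_p`. -/
noncomputable def toRat (p : ℕ) (k : Type*) [Field k] [CharP k p] : (ZMod p)[X] →+* RatFunc k :=
  (algebraMap k[X] (RatFunc k)).comp (mapRingHom (ZMod.castHom dvd_rfl k))

/-- Equality up to a nonzero square factor. -/
def SqRel {F : Type*} [Field F] (a b : F) : Prop := ∃ h : F, h ≠ 0 ∧ a = h ^ 2 * b

lemma SqRel.symm {F : Type*} [Field F] {a b : F} (h : SqRel a b) : SqRel b a := by
  obtain ⟨h, h0, rfl⟩ := h
  exact ⟨h⁻¹, inv_ne_zero h0, by field_simp⟩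

lemma SqRel.trans {F : Type*} [Field F] {a b c : F} (h : SqRel a b) (h' : SqRel b c) :
    SqRel a c := by
  obtain ⟨h, h0, rfl⟩ := h
  obtain ⟨g, g0, rfl⟩ := h'
  exact ⟨h * g, mul_ne_zero h0 g0, by ring⟩

section
variable {p : ℕ} [Fact p.Prime] {k : Type*} [Field k] [CharP k p]

lemma toRat_injective : Function.Injective (toRat p k) :=
  (RatFunc.algebraMap_injective k).comp (map_injective _ (RingHom.injective _))

lemma sqRel_const [IsAlgClosed k] (c : ZMod p) (hc : c ≠ 0) (y : (ZMod p)[X]) :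
    SqRel (toRat p k (C c * y)) (toRat p k y) := by
  obtain ⟨z, hz⟩ := IsAlgClosed.exists_pow_nat_eq (ZMod.castHom dvd_rfl k c) (n := 2) (by norm_num)
  have hz' : algebraMap k[X] (RatFunc k) (C z) ^ 2 = toRat p k (C c) := by
    simp only [toRat, RingHom.comp_apply, coe_mapRingHom, map_C]
    rw [← hz, C_pow, map_pow]
  refine ⟨algebraMap k[X] (RatFunc k) (C z), ?_, by rw [hz', map_mul]⟩
  intro h
  rw [h, zero_pow two_ne_zero, eq_comm, map_eq_zero_iff _ toRat_injective, C_eq_zero] at hz'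
  exact hc hz'

lemma sqRel_pow (x y : (ZMod p)[X]) (hx : x ≠ 0) (s : ℕ) (hs : Even s) :
    SqRel (toRat p k (x ^ s * y)) (toRat p k y) := by
  obtain ⟨r, rfl⟩ := hs
  refine ⟨toRat p k x ^ r, pow_ne_zero _ ?_, by rw [map_mul, map_pow]; ring⟩
  rwa [Ne, map_eq_zero_iff _ toRat_injective]

lemma one_sub_X_ne : (1 - X : (ZMod p)[X]) ≠ 0 := by
  intro h0
  simpa using congrArg (fun P : (ZMod p)[X] => P.coeff 0) h0

/-- The case `N ≤ A`. The sign of `q - A - B` decides which of the two polynomials is multiplied by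
a power of `1 - X`. -/
lemma sqRel_hasseSum_aux [IsAlgClosed k] (A A' B B' N N' : ℕ) (hA : A + A' + 1 = p)
    (hB : B + B' + 1 = p) (hN : N + N' + 1 = p) (hle : A ≤ N + B') (hNA : N ≤ A)
    (e1 : Even (A + N)) (e2 : Even (A + B + (p - 1))) :
    SqRel (toRat p k (hasseSum p A B N)) (toRat p k (hasseSum p A' B' N')) := by
  obtain ⟨e, rfl⟩ := Nat.exists_eq_add_of_le hNA
  obtain rfl : N' = A' + e := by omega
  have he : Even e := by
    rw [show N + e + N = 2 * N + e by ring] at e1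
    simpa [Nat.even_add] using e1
  rw [hasseSum_eq_hypPoly, hasseSum_dual_eq]
  refine SqRel.trans ?_ (sqRel_pow X _ X_ne_zero e he).symm
  rcases le_total (N + e + B) (p - 1) with hs | hs
  · obtain ⟨s, hs⟩ := Nat.exists_eq_add_of_le hs
    have hse : Even s := by
      rw [hs, ← add_assoc, Nat.even_add] at e2
      exact e2.mp ⟨_, rfl⟩
    obtain ⟨c, hc, h⟩ := euler_hypPoly (p := p) (N + e) B s e (by omega) (by omega)
    rw [show N + e + s = B' by omega, show B + s = A' by omega] at h
    have r1 := sqRel_pow (k := k) (1 - X) (hypPoly p (N + e) B e) one_sub_X_ne s hse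
    rw [h] at r1
    exact r1.symm.trans (sqRel_const c hc _)
  · obtain ⟨s, hs⟩ := Nat.exists_eq_add_of_le hs
    have hse : Even s := by
      rw [hs, add_right_comm, Nat.even_add] at e2
      exact e2.mp ⟨_, rfl⟩
    obtain ⟨c, hc, h⟩ := euler_hypPoly (p := p) B' A' s e (by omega) (by omega)
    rw [show B' + s = N + e by omega, show A' + s = B by omega] at h
    have r1 := sqRel_pow (k := k) (1 - X) (hypPoly p B' A' e) one_sub_X_ne s hse
    rw [h] at r1
    exact (sqRel_const c hc _).symm.trans r1

/-- Up to squares, `Φ_a = Φ_{a*}`. The case `A ≤ N` follows by exchanging `a` and `a*`. -/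
lemma sqRel_hasseSum [IsAlgClosed k] (A A' B B' N N' : ℕ) (hA : A + A' + 1 = p)
    (hB : B + B' + 1 = p) (hN : N + N' + 1 = p) (hle : A ≤ N + B') (hle' : N ≤ A + B)
    (e1 : Even (A + N)) (e2 : Even (A + B + (p - 1))) :
    SqRel (toRat p k (hasseSum p A B N)) (toRat p k (hasseSum p A' B' N')) := by
  rcases le_total N A with h | h
  · exact sqRel_hasseSum_aux A A' B B' N N' hA hB hN hle h e1 e2
  · refine (sqRel_hasseSum_aux A' A B' B N' N (by omega) (by omega) (by omega) (by omega)
      (by omega) ?_ ?_).symm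
    · rw [Nat.even_iff] at *; omega
    · rw [Nat.even_iff] at *; omega

lemma sqRel_hasseInv [IsAlgClosed k] (m a2 a3 a4 : ℕ) :
    SqRel (toRat p k (HasseInv p m a2 a3 a4))
      (toRat p k (hasseSum p ((p - 1) / m * (m - a2)) ((p - 1) / m * (m - a4))
        ((p - 1) / m * a3))) :=
  sqRel_const _ (pow_ne_zero _ (neg_ne_zero.mpr one_ne_zero)) _

end

lemma SqRel.zpow_mul_zpow {F : Type*} [Field F] {a b : F} (h : SqRel a b) (r : ℕ) :
    ∃ g : F, a ^ (1 + r : ℤ) * b ^ (1 - r : ℤ) = g ^ 2 := by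
  obtain ⟨h, h0, rfl⟩ := h
  by_cases hb : b = 0
  · exact ⟨0, by rw [hb, mul_zero, zero_zpow _ (by omega)]; simp⟩
  · refine ⟨h ^ (1 + r : ℤ) * b, ?_⟩
    rw [mul_zpow, mul_assoc, ← zpow_add₀ hb, show (1 + r + (1 - r) : ℤ) = 2 by ring, mul_pow,
      ← zpow_natCast (h ^ (1 + r : ℤ)), ← zpow_natCast h, ← zpow_mul, ← zpow_mul, mul_comm (1 + _)]
    norm_cast

/-- with `d = gcd(m, a1+a3, a2+a3)` even, `d ≠ m`, `m > 2`, the rational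
function `Φ_a(t)^{1+m/d} Φ_{a*}(t)^{1-m/d} ∈ k(t)` is a square in `k(t)`. -/
theorem stmt11 (p m a1 a2 a3 a4 : ℕ) (hp : p.Prime) [Fact p.Prime] (hp2 : 2 < p)
    (hm2 : 2 < m) (hmd : m ∣ p - 1)
    (h1 : 0 < a1 ∧ a1 < m) (h2 : 0 < a2 ∧ a2 < m) (h3 : 0 < a3 ∧ a3 < m)
    (h4 : 0 < a4 ∧ a4 < m) (hsum : a1 + a2 + a3 + a4 = 2 * m)
    (d : ℕ) (hd : d = Nat.gcd m (Nat.gcd (a1 + a3) (a2 + a3)))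
    (hdeven : Even d) (hdm : d ≠ m)
    (k : Type*) [Field k] [IsAlgClosed k] [CharP k p] :
    ∃ g : RatFunc k,
      (algebraMap (Polynomial k) (RatFunc k)
            ((HasseInv p m a2 a3 a4).map (ZMod.castHom dvd_rfl k))) ^ (1 + (m / d : ℕ) : ℤ) *
        (algebraMap (Polynomial k) (RatFunc k)
            ((HasseInv p m (m - a2) (m - a3) (m - a4)).map (ZMod.castHom dvd_rfl k)))
          ^ (1 - (m / d : ℕ) : ℤ) = g ^ 2 := by
  suffices h : SqRel (toRat p k (HasseInv p m a2 a3 a4))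
      (toRat p k (HasseInv p m (m - a2) (m - a3) (m - a4))) from h.zpow_mul_zpow (m / d)
  refine (sqRel_hasseInv m a2 a3 a4).trans (SqRel.trans ?_ (sqRel_hasseInv m _ _ _).symm)
  obtain ⟨α, hα⟩ := hmd
  have hdiv : (p - 1) / m = α := by rw [hα]; exact Nat.mul_div_cancel_left _ (by omega)
  rw [hdiv]
  have e0 : Even m := hdeven.trans_dvd (hd ▸ Nat.gcd_dvd_left _ _)
  have e13 : Even (a1 + a3) :=
    hdeven.trans_dvd (hd ▸ (Nat.gcd_dvd_right _ _).trans (Nat.gcd_dvd_left _ _))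
  have e23 : Even (a2 + a3) :=
    hdeven.trans_dvd (hd ▸ (Nat.gcd_dvd_right _ _).trans (Nat.gcd_dvd_right _ _))
  have hpm : α * m + 1 = p := by rw [mul_comm]; omega
  have hpair : ∀ x, x < m → α * x + α * (m - x) + 1 = p := by
    intro x hx
    rw [← mul_add, Nat.add_sub_cancel' hx.le, hpm]
  have hpair' : ∀ x, 0 < x ∧ x < m → α * (m - x) + α * (m - (m - x)) + 1 = p := by
    intro x hx
    exact hpair (m - x) (by omega)
  refine sqRel_hasseSum _ _ _ _ _ _ (hpair' a2 h2) (hpair' a4 h4) (hpair a3 h3.2) ?_ ?_ ?_ ?_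
  · rw [← mul_add]; exact Nat.mul_le_mul_left _ (by omega)
  · rw [← mul_add]; exact Nat.mul_le_mul_left _ (by omega)
  · rw [← mul_add]
    refine Even.mul_left ?_ _
    rw [Nat.even_iff] at *; omega
  · rw [hα, mul_comm m, ← mul_add, ← mul_add]
    refine Even.mul_left ?_ _
    rw [Nat.even_iff] at *; omega
end

section
/- Let p be a prime with p > 5 and p ≡ 1 (mod 5), and let ζ5 ∈ F_p^× be an element of order 5. Let 5A = {A ∈ SL_2(F_p) : tr(A) = ζ5 + ζ5^4} and 5B = {A ∈ SL_2(F_p) : tr(A) = ζ5^2 + ζ5^3}; these are conjugacy classes of SL_2(F_p). For a conjugacy class C, let Ni(C,C,C) be the set of triples (g1,g2,g3) ∈ C³ with g1·g2·g3 = 1 and g1, g2, g3 generating SL_2(F_p), modulo simultaneous conjugation by SL_2(F_p). Then Ni(5A,5A,5A) has exactly two elements, and Ni(5B,5B,5B) has exactly two elements. -/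
/-!
Write `t = ζ + ζ⁻¹` with `ζ` of order `5`, so that `t² + t = 1`. A triple in `Ni(C, C, C)` is the
same as a pair `(a, b)` with `tr a = tr b = tr ab = t` which generates `SL₂(𝔽_p)`.

*Generation is automatic* (`eq_top_of_trace`). Let `H` be a subgroup containing such a pair, and let
`{±1}H` act on the projective line over an algebraic closure of `𝔽_p`. If no element of `{±1}H`
other than `±1` had trace `±2`, each of them would fix exactly two points, and counting orbits on
the set of all these fixed points (Burnside) would leave three orbits whose stabilisers have orders
`s₁, s₂, s₃` with `1/s₁ + 1/s₂ + 1/s₃ = 1/2 + 2/|{±1}H|`: the classical argument that leads to the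
platonic groups. Here `a` has order `5`, whereas `c = a b⁻¹` has trace `t² - t = 1 - 2 t`, which
forces `c⁴, c⁶, c¹⁰ ≠ 1`; moreover `a` and `b` have no common eigenvector. These facts contradict
the count (`no_platonic_action`). So `H` contains a nontrivial unipotent `u` (`exists_unipotent`).
As `a` and `b` have no common eigenvector, one of them moves the line fixed by `u`, so `u` and a
conjugate of `u` are, in a suitable basis, an upper and a lower transvection, and these generate
`SL₂(𝔽_p)`.

*Counting* (`card_Ni`). As `ζ ∈ 𝔽_p`, conjugation makes `a = diag(ζ, ζ⁻¹)`. The traces of `b` and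
`ab` then determine the diagonal of `b`, and its upper right entry `y` is nonzero. The centraliser
of `a` is the diagonal torus, and `diag(s, s⁻¹)` replaces `y` by `s² y`. Hence the classes
correspond to the square classes of `𝔽_pˣ`, of which there are two.
-/

open Matrix

/-- Triples `(g1, g2, g3)` with `g_j ∈ C_j`, `g1 g2 g3 = 1`, generating the whole group. -/
def NielsenTriple {G : Type*} [Group G] (C1 C2 C3 : Set G) : Type _ :=
  {t : G × G × G // t.1 ∈ C1 ∧ t.2.1 ∈ C2 ∧ t.2.2 ∈ C3 ∧ t.1 * t.2.1 * t.2.2 = 1 ∧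
    Subgroup.closure {t.1, t.2.1, t.2.2} = ⊤}

/-- The Nielsen class: such triples modulo simultaneous conjugation. -/
def Ni {G : Type*} [Group G] (C1 C2 C3 : Set G) : Type _ :=
  Quot (fun t t' : NielsenTriple C1 C2 C3 =>
    ∃ h : G, (t'.val : G × G × G) =
      (h * t.val.1 * h⁻¹, h * t.val.2.1 * h⁻¹, h * t.val.2.2 * h⁻¹))

/-! ### Orbit counting -/

/-- With orbit sizes `qᵢ` and stabiliser orders `sᵢ`, the hypothesis `hsum` says
`1/s₁ + 1/s₂ + 1/s₃ = 1/2 + 2/n`, which is impossible since `1/10 + 1/8 + 1/4 < 1/2`. -/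
lemma three_orbits_distinct {n q₁ q₂ q₃ s₁ s₂ s₃ : ℕ} (h₁ : q₁ * s₁ = n) (h₂ : q₂ * s₂ = n)
    (h₃ : q₃ * s₃ = n) (hs₁ : 10 ≤ s₁) (hs₂ : 8 ≤ s₂) (hs₃ : 4 ≤ s₃)
    (hsum : 3 * n = 2 * (q₁ + q₂ + q₃) + 2 * (n - 2)) (hn : 2 ≤ n) : False := by
  have := Nat.mul_le_mul_left q₁ hs₁
  have := Nat.mul_le_mul_left q₂ hs₂
  have := Nat.mul_le_mul_left q₃ hs₃
  omega

/-- As in `three_orbits_distinct`, but with one large stabiliser: since `1/20 + 1/4 + 1/6 < 1/2`,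
the other two stabilisers have order `4`, and the remaining orbit has two points. -/
lemma three_orbits_same {n q₁ q₂ q₃ s₁ s₂ s₃ : ℕ} (h₁ : q₁ * s₁ = n) (h₂ : q₂ * s₂ = n)
    (h₃ : q₃ * s₃ = n) (hs₁ : 20 ≤ s₁) (hs₂ : 4 ≤ s₂) (hs₃ : 4 ≤ s₃) (he₂ : 2 ∣ s₂)
    (he₃ : 2 ∣ s₃)
    (hsum : 3 * n = 2 * (q₁ + q₂ + q₃) + 2 * (n - 2)) (hn : 2 ≤ n) : q₁ = 2 := by
  have := Nat.mul_le_mul_left q₁ hs₁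
  have k₂ : q₂ * 4 = n ∨ q₂ * 6 ≤ n := by
    rcases (by omega : s₂ = 4 ∨ 6 ≤ s₂) with rfl | h
    · exact Or.inl h₂
    · exact Or.inr (h₂ ▸ Nat.mul_le_mul_left q₂ h)
  have k₃ : q₃ * 4 = n ∨ q₃ * 6 ≤ n := by
    rcases (by omega : s₃ = 4 ∨ 6 ≤ s₃) with rfl | h
    · exact Or.inl h₃
    · exact Or.inr (h₃ ▸ Nat.mul_le_mul_left q₃ h)
  omega

section
variable {G X : Type*} [Group G] [MulAction G X]

lemma card_orbit_mul_stab [Finite G] (x : X) :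
    Nat.card (MulAction.orbit G x) * Nat.card (MulAction.stabilizer G x) = Nat.card G := by
  classical
  have := Fintype.ofFinite G
  have : Finite (MulAction.orbit G x) := Set.Finite.to_subtype (Set.finite_range _)
  have := Fintype.ofFinite (MulAction.orbit G x)
  simp only [Nat.card_eq_fintype_card]
  exact MulAction.card_orbit_mul_card_stabilizer_eq_card_group G x

/-- Burnside's count `r |G| = 2 |X| + 2 (|G| - 2)` for the number `r` of orbits, when an element
`z ≠ 1` acts trivially and every element except `1` and `z` fixes exactly two points. -/
lemma orbit_count [Finite G] [Finite X] (z : G) (hz : z ≠ 1) (hzX : ∀ x : X, z • x = x)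
    (h2 : ∀ g : G, g ≠ 1 → g ≠ z → Nat.card (MulAction.fixedBy X g) = 2) :
    Nat.card (MulAction.orbitRel.Quotient G X) * Nat.card G =
      2 * Nat.card X + 2 * (Nat.card G - 2) := by
  classical
  have := Fintype.ofFinite G
  have := Fintype.ofFinite X
  have := Fintype.ofFinite (MulAction.orbitRel.Quotient G X)
  have h := MulAction.sum_card_fixedBy_eq_card_orbits_mul_card_group G X
  simp only [Nat.card_eq_fintype_card] at h2 ⊢
  have h' : Fintype.card (Quotient (MulAction.orbitRel G X)) =
    Fintype.card (MulAction.orbitRel.Quotient G X) := Fintype.card_congr (Equiv.refl _)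
  rw [h'] at h
  rw [← h, ← Finset.sum_sdiff (Finset.subset_univ ({1, z} : Finset G)), Finset.sum_pair hz.symm,
    add_comm]
  congr 1
  · have key : ∀ g : G, (∀ x : X, g • x = x) →
        Fintype.card (MulAction.fixedBy X g) = Fintype.card X := by
      intro g hg
      have : MulAction.fixedBy X g = Set.univ := by ext x; simp [hg]
      simp [this]
    rw [key 1 (fun x => one_smul _ x), key z hzX, two_mul]
  · rw [Finset.sum_congr rfl (g := fun _ => 2), Finset.sum_const, Finset.card_sdiff_of_subset
      (Finset.subset_univ _), Finset.card_pair hz.symm, Finset.card_univ, smul_eq_mul, mul_comm]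
    intro g hg
    simp only [Finset.mem_sdiff, Finset.mem_univ, Finset.mem_insert, Finset.mem_singleton,
      true_and, not_or] at hg
    exact h2 g hg.1 hg.2

variable (G X) in
lemma card_eq_sum_orbits [Finite X] [Fintype (MulAction.orbitRel.Quotient G X)] :
    Nat.card X = ∑ ω : MulAction.orbitRel.Quotient G X, Nat.card ω.orbit := by
  rw [Nat.card_congr (MulAction.selfEquivSigmaOrbits' G X), Nat.card_sigma]

/-- The orbit count at the origin of the classification of the platonic groups. One orbit is too few
for the count, and two orbits would be single points, fixed by both `a` and `b`; so there are three
orbits. A fixed point `x` of `a` has a stabiliser of order divisible by `10`, a fixed point `y` of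
`c` one of even order at least `8` and different from `10`. If `x` and `y` lie in different orbits,
the stabilisers are too large. If they lie in one orbit, that orbit has two points, so the
stabiliser of `x` has index `2` and contains the element `b` of odd order, which then shares the
fixed point `x` with `a`. -/
lemma no_platonic_action [Finite G] [Finite X] (z : G) (hz : z ≠ 1) (hzz : z ^ 2 = 1)
    (hzX : ∀ x : X, z • x = x)
    (h2 : ∀ g : G, g ≠ 1 → g ≠ z → Nat.card (MulAction.fixedBy X g) = 2)
    (hs : ∀ x : X, ∃ g : G, g ≠ 1 ∧ g ≠ z ∧ g • x = x)
    (a b c : G) (ha1 : a ≠ 1) (ha : a ^ 5 = 1) (hb : b ^ 5 = 1)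
    (hc4 : c ^ 4 ≠ 1) (hc6 : c ^ 6 ≠ 1) (hc10 : c ^ 10 ≠ 1)
    (x y : X) (hx : a • x = x) (hy : c • y = y)
    (hab : ∀ x : X, a • x = x → b • x = x → False) : False := by
  classical
  have := Fintype.ofFinite (MulAction.orbitRel.Quotient G X)
  set n := Nat.card G with hn
  have hcount := orbit_count z hz hzX h2
  rw [card_eq_sum_orbits G X, ← hn] at hcount
  have hstab : ∀ x : X, 2 ∣ Nat.card (MulAction.stabilizer G x) ∧
      4 ≤ Nat.card (MulAction.stabilizer G x) := by
    intro x
    have hd : 2 ∣ Nat.card (MulAction.stabilizer G x) := by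
      rw [← orderOf_eq_prime hzz hz]
      exact Subgroup.orderOf_dvd_natCard _ (hzX x)
    refine ⟨hd, ?_⟩
    obtain ⟨g, hg1, hgz, hg⟩ := hs x
    have h3 : 2 < Nat.card (MulAction.stabilizer G x) := by
      have : Nat.card (({1, z, g} : Finset G) : Set G) ≤
          Nat.card (MulAction.stabilizer G x : Set G) := by
        apply Nat.card_mono (Set.toFinite _)
        intro k hk
        simp only [Finset.coe_insert, Finset.coe_singleton, Set.mem_insert_iff,
          Set.mem_singleton_iff] at hk
        rcases hk with rfl | rfl | rfl
        · exact one_smul _ x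
        · exact hzX x
        · exact hg
      have h3 : ({1, z, g} : Finset G).card = 3 := Finset.card_eq_three.2
        ⟨1, z, g, hz.symm, hg1.symm, hgz.symm, rfl⟩
      rw [Nat.card_coe_set_eq, Set.ncard_coe_finset, h3] at this
      exact this
    omega
  have hω : ∀ ω : MulAction.orbitRel.Quotient G X, ∃ s, Nat.card ω.orbit * s = n ∧ 2 ∣ s ∧
      4 ≤ s := by
    intro ω
    induction ω using Quotient.inductionOn' with | h x =>
    exact ⟨_, card_orbit_mul_stab x, hstab x⟩
  have hsx : 10 ∣ Nat.card (MulAction.stabilizer G x) := by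
    have h5 : 5 ∣ Nat.card (MulAction.stabilizer G x) := by
      have : Fact (Nat.Prime 5) := ⟨by norm_num⟩
      rw [← orderOf_eq_prime ha ha1]
      exact Subgroup.orderOf_dvd_natCard _ hx
    have := (hstab x).1
    omega
  have hcpow : c ^ Nat.card (MulAction.stabilizer G y) = 1 := by
    have := pow_card_eq_one' (x := (⟨c, hy⟩ : MulAction.stabilizer G y))
    simpa [Subtype.ext_iff] using this
  have hsy : 8 ≤ Nat.card (MulAction.stabilizer G y) ∧
      Nat.card (MulAction.stabilizer G y) ≠ 10 := by
    have h4 : Nat.card (MulAction.stabilizer G y) ≠ 4 := fun h => hc4 (h ▸ hcpow)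
    have h6 : Nat.card (MulAction.stabilizer G y) ≠ 6 := fun h => hc6 (h ▸ hcpow)
    have h10 : Nat.card (MulAction.stabilizer G y) ≠ 10 := fun h => hc10 (h ▸ hcpow)
    have := hstab y
    omega
  let mk : X → MulAction.orbitRel.Quotient G X := Quotient.mk''
  have hqx : ∀ x, Nat.card (mk x).orbit = Nat.card (MulAction.orbit G x) := fun x => rfl
  have hnx := card_orbit_mul_stab (G := G) x
  have hny := card_orbit_mul_stab (G := G) y
  rw [← hqx, ← hn] at hnx hny
  have hn4 : 4 ≤ n := by
    have := Nat.le_of_dvd Nat.card_pos (Subgroup.card_subgroup_dvd_card (MulAction.stabilizer G x))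
    have := (hstab x).2
    omega
  have hle : ∑ ω : MulAction.orbitRel.Quotient G X, Nat.card ω.orbit * 4 ≤
      ∑ ω : MulAction.orbitRel.Quotient G X, n := by
    refine Finset.sum_le_sum fun ω _ => ?_
    obtain ⟨s, h1, -, h3⟩ := hω ω
    rw [← h1]
    exact Nat.mul_le_mul_left _ h3
  -- An orbit with at most two points cannot contain `x`: its stabiliser would contain `b`.
  have hfix : ∀ q, q = Nat.card (mk x).orbit → q ≤ 2 → 1 ≤ q → False := by
    intro q hq hq2 hq1
    have hidx : (MulAction.stabilizer G x).index = q := by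
      rw [hq, hqx, MulAction.index_stabilizer, Nat.card_coe_set_eq]
    refine hab x hx ?_
    have hb2 : b ^ 2 ∈ MulAction.stabilizer G x := by
      rcases (by omega : q = 1 ∨ q = 2) with h | h
      · rw [Subgroup.index_eq_one.1 (hidx.trans h)]; trivial
      · exact Subgroup.sq_mem_of_index_two (hidx.trans h) b
    have : b = (b ^ 2) ^ 3 := by
      rw [← pow_mul, show 2 * 3 = 5 + 1 from rfl, pow_succ, hb, one_mul]
    rw [this]
    exact (MulAction.stabilizer G x).pow_mem hb2 3
  have hpos : ∀ ω : MulAction.orbitRel.Quotient G X, 1 ≤ Nat.card ω.orbit := by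
    intro ω
    obtain ⟨s, h1, -, -⟩ := hω ω
    by_contra h
    rw [show Nat.card ω.orbit = 0 by omega] at h1
    omega
  rw [← Finset.sum_mul, Finset.sum_const, Finset.card_univ, smul_eq_mul,
    ← Nat.card_eq_fintype_card] at hle
  -- All stabilisers have order at least `4`, so `|X| ≤ r n / 4`, and the count bounds `r`.
  have hr : Nat.card (MulAction.orbitRel.Quotient G X) < 4 := by
    by_contra h
    have := Nat.mul_le_mul_right n (not_lt.1 h)
    omega
  have hr0 : 0 < Nat.card (MulAction.orbitRel.Quotient G X) := by
    have : Nonempty (MulAction.orbitRel.Quotient G X) := ⟨mk x⟩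
    exact Nat.card_pos
  have hmem := fun x => Finset.mem_univ (mk x)
  have hcases : Nat.card (MulAction.orbitRel.Quotient G X) = 1 ∨
      Nat.card (MulAction.orbitRel.Quotient G X) = 2 ∨
      Nat.card (MulAction.orbitRel.Quotient G X) = 3 := by omega
  have hcu : Nat.card (MulAction.orbitRel.Quotient G X) =
    (Finset.univ : Finset (MulAction.orbitRel.Quotient G X)).card := by simp
  rcases hcases with h | h | h <;> rw [h] at hcount
  · rw [hcu, Finset.card_eq_one] at h
    obtain ⟨u, hu⟩ := h
    rw [hu, Finset.sum_singleton] at hcount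
    have := hpos u
    omega
  · rw [hcu, Finset.card_eq_two] at h
    obtain ⟨u, v, huv, hu⟩ := h
    rw [hu, Finset.sum_pair huv] at hcount
    have h1 := hpos u
    have h2 := hpos v
    have h3 := hmem x
    rw [hu, Finset.mem_insert, Finset.mem_singleton] at h3
    rcases h3 with h3 | h3
    · exact hfix _ rfl (by rw [h3]; omega) (hpos _)
    · exact hfix _ rfl (by rw [h3]; omega) (hpos _)
  · rw [hcu, Finset.card_eq_three] at h
    obtain ⟨u, v, w, huv, huw, hvw, hu⟩ := h
    rw [hu, Finset.sum_insert (by simp [huv, huw]), Finset.sum_pair hvw, ← add_assoc] at hcount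
    have hx3 := hmem x
    have hy3 := hmem y
    have hsx0 : 10 ≤ Nat.card (MulAction.stabilizer G x) := by
      have := (hstab x).2
      omega
    obtain ⟨su, hu1, hu2, hu3⟩ := hω u
    obtain ⟨sv, hv1, hv2, hv3⟩ := hω v
    obtain ⟨sw, hw1, hw2, hw3⟩ := hω w
    by_cases hxy : mk x = mk y
    · have hsx20 : 20 ≤ Nat.card (MulAction.stabilizer G x) := by
        have : Nat.card (MulAction.stabilizer G x) = Nat.card (MulAction.stabilizer G y) := by
          rw [← hxy, ← hnx] at hny
          exact (Nat.eq_of_mul_eq_mul_left (hpos _) hny).symm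
        omega
      have hq2 : Nat.card (mk x).orbit = 2 := by
        rw [hu] at hx3
        simp only [Finset.mem_insert, Finset.mem_singleton] at hx3
        rcases hx3 with e | e | e <;> rw [e] at hnx ⊢
        · exact three_orbits_same hnx hv1 hw1 hsx20 hv3 hw3 hv2 hw2 hcount (by omega)
        · exact three_orbits_same hnx hu1 hw1 hsx20 hu3 hw3 hu2 hw2 (by omega) (by omega)
        · exact three_orbits_same hnx hu1 hv1 hsx20 hu3 hv3 hu2 hv2 (by omega) (by omega)
      exact hfix _ rfl (by omega) (by omega)
    · have key : ∀ (t : MulAction.orbitRel.Quotient G X) (st : ℕ), Nat.card t.orbit * st = n →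
          4 ≤ st →
          3 * n = 2 * (Nat.card (mk x).orbit + Nat.card (mk y).orbit + Nat.card t.orbit) +
            2 * (n - 2) → False := fun t st h1 h3 h =>
        three_orbits_distinct hnx hny h1 hsx0 hsy.1 h3 h (by omega)
      rw [hu] at hx3 hy3
      simp only [Finset.mem_insert, Finset.mem_singleton] at hx3 hy3
      rcases hx3 with e | e | e <;> rcases hy3 with f | f | f <;>
        first
        | exact hxy (e.trans f.symm)
        | exact key u su hu1 hu3 (by rw [e, f]; omega)
        | exact key v sv hv1 hv3 (by rw [e, f]; omega)
        | exact key w sw hw1 hw3 (by rw [e, f]; omega)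

/-- `no_platonic_action` for an action on a possibly infinite set, such as the projective line: the
set of points with a stabiliser larger than `{1, z}` is finite and stable. -/
lemma no_platonic_action' [Finite G] (z : G) (hz : z ≠ 1) (hzz : z ^ 2 = 1)
    (hzc : ∀ g : G, g * z = z * g)
    (hzX : ∀ x : X, z • x = x)
    (h2 : ∀ g : G, g ≠ 1 → g ≠ z → Nat.card (MulAction.fixedBy X g) = 2)
    (a b c : G) (ha1 : a ≠ 1) (haz : a ≠ z) (ha : a ^ 5 = 1) (hb : b ^ 5 = 1)
    (hc4 : c ^ 4 ≠ 1) (hc6 : c ^ 6 ≠ 1) (hc10 : c ^ 10 ≠ 1)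
    (hab : ∀ x : X, a • x = x → b • x = x → False) : False := by
  -- The points fixed by some element other than `1` and `z`.
  let Y : SubMulAction G X :=
    { carrier := {x | ∃ g : G, g ≠ 1 ∧ g ≠ z ∧ g • x = x}
      smul_mem' := by
        rintro k x ⟨g, h1, h2, h3⟩
        refine ⟨k * g * k⁻¹, by simpa using h1, fun h => h2 ?_, ?_⟩
        · rw [mul_inv_eq_iff_eq_mul, ← hzc] at h
          exact mul_left_cancel h
        · rw [mul_smul, inv_smul_smul, mul_smul, h3] }
  have hne : ∀ g : G, g ≠ 1 → g ≠ z → ∃ x : X, g • x = x := by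
    intro g h1 h3
    have : Nonempty (MulAction.fixedBy X g) := by
      by_contra hc
      rw [not_nonempty_iff] at hc
      have := h2 g h1 h3
      simp at this
    exact ⟨this.some.1, this.some.2⟩
  have hfin : Finite Y := by
    have : (Y : Set X) ⊆ ⋃ g : {g : G // g ≠ 1 ∧ g ≠ z}, MulAction.fixedBy X g.1 := by
      rintro x ⟨g, h1, h2, h3⟩
      exact Set.mem_iUnion.2 ⟨⟨g, h1, h2⟩, h3⟩
    refine Set.Finite.subset (Set.finite_iUnion fun g => ?_) this
    refine Nat.finite_of_card_ne_zero (α := MulAction.fixedBy X g.1) ?_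
    rw [h2 _ g.2.1 g.2.2]
    norm_num
  have hc1 : c ≠ 1 := by rintro rfl; simp at hc4
  have hcz : c ≠ z := by
    rintro rfl
    exact hc4 (by rw [show 4 = 2 * 2 from rfl, pow_mul, hzz, one_pow])
  obtain ⟨x, hx⟩ := hne a ha1 haz
  obtain ⟨y, hy⟩ := hne c hc1 hcz
  refine no_platonic_action (X := Y) z hz hzz (fun x => Subtype.ext (hzX x)) ?_ ?_ a b c ha1 ha hb
    hc4 hc6 hc10 ⟨x, a, ha1, haz, hx⟩ ⟨y, c, hc1, hcz, hy⟩ (Subtype.ext hx) (Subtype.ext hy) ?_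
  · intro g h1 h3
    rw [← h2 g h1 h3]
    exact Nat.card_congr
      { toFun := fun x => ⟨x.1.1, congrArg Subtype.val x.2⟩
        invFun := fun x => ⟨⟨x.1, g, h1, h3, x.2⟩, Subtype.ext x.2⟩
        left_inv := fun x => rfl
        right_inv := fun x => rfl }
  · rintro ⟨x, g, h1, h2, h3⟩
    exact ⟨g, h1, h2, Subtype.ext h3⟩
  · rintro ⟨x, hx⟩ h1 h2
    exact hab x (congrArg Subtype.val h1) (congrArg Subtype.val h2)
end

/-! ### Matrices of determinant one and their fixed points on the projective line -/

section
variable {K : Type*} [Field K]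

lemma charpoly_eigen {A : Matrix (Fin 2) (Fin 2) K} {α : K} {v : Fin 2 → K} (hA : A.det = 1)
    (hv : v ≠ 0) (h : A *ᵥ v = α • v) : α ^ 2 - A.trace * α + 1 = 0 := by
  have hdet : (A - α • (1 : Matrix (Fin 2) (Fin 2) K)).det = 0 :=
    exists_mulVec_eq_zero_iff.1 ⟨v, hv, by rw [sub_mulVec, h, smul_mulVec, one_mulVec, sub_self]⟩
  rw [det_fin_two] at hA hdet
  simp only [Matrix.sub_apply, Matrix.smul_apply, one_apply_eq, smul_eq_mul, mul_one, ne_eq,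
    zero_ne_one, not_false_eq_true, one_apply_ne, mul_zero, sub_zero, one_ne_zero] at hdet
  rw [trace_fin_two]
  linear_combination hdet - hA

/-- If `A` and `B` have eigenvalues `α` and `β` on `v`, then `α`, `β` and `α β` are all roots of
`X² - t X + 1`. So `β` is `α` or `α⁻¹`, and either case contradicts `t² + t = 1` unless `5 = 0`. -/
lemma no_common_eigenvector_s14 {A B : Matrix (Fin 2) (Fin 2) K} {t α β : K} {v : Fin 2 → K}
    (ht : t ^ 2 + t = 1) (h5 : (5 : K) ≠ 0)
    (hA : A.det = 1) (hB : B.det = 1) (hAt : A.trace = t) (hBt : B.trace = t)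
    (hABt : (A * B).trace = t) (hv : v ≠ 0) (h : A *ᵥ v = α • v) (h' : B *ᵥ v = β • v) :
    False := by
  have h1 := charpoly_eigen hA hv h
  have h2 := charpoly_eigen hB hv h'
  have h3 := charpoly_eigen (α := α * β) (A := A * B) (by rw [det_mul, hA, hB, one_mul]) hv
    (by rw [← mulVec_mulVec, h', mulVec_smul, h, smul_smul, mul_comm])
  rw [hAt] at h1
  rw [hBt] at h2
  rw [hABt] at h3
  have h4 : (α - β) * (α + β - t) = 0 := by linear_combination h1 - h2
  apply h5
  rcases mul_eq_zero.1 h4 with h | h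
  · obtain rfl : α = β := sub_eq_zero.1 h
    grind
  · obtain rfl : β = t - α := by linear_combination h
    grind

/-- The Cayley-Hamilton theorem. -/
lemma sq_of_det_one {A : Matrix (Fin 2) (Fin 2) K} (hA : A.det = 1) :
    A ^ 2 = A.trace • A - 1 := by
  rw [det_fin_two] at hA
  ext i j
  fin_cases i <;> fin_cases j <;> simp [pow_two, mul_apply, trace_fin_two] <;>
    first | linear_combination hA | linear_combination -hA | ring

lemma trace_pow_add_two {A : Matrix (Fin 2) (Fin 2) K} (hA : A.det = 1) (n : ℕ) :
    (A ^ (n + 2)).trace = A.trace * (A ^ (n + 1)).trace - (A ^ n).trace := by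
  rw [pow_add, sq_of_det_one hA, mul_sub, mul_smul_comm, ← pow_succ, mul_one, trace_sub,
    trace_smul, smul_eq_mul]

lemma trace_pow_two_of_det_one {A : Matrix (Fin 2) (Fin 2) K} (hA : A.det = 1) :
    (A ^ 2).trace = A.trace ^ 2 - 2 := by
  rw [trace_pow_add_two hA 0]
  simp [pow_two]

lemma trace_pow_three_of_det_one {A : Matrix (Fin 2) (Fin 2) K} (hA : A.det = 1) :
    (A ^ 3).trace = A.trace ^ 3 - 3 * A.trace := by
  rw [trace_pow_add_two hA 1, trace_pow_two_of_det_one hA, pow_one]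
  ring

lemma trace_pow_five_of_det_one {A : Matrix (Fin 2) (Fin 2) K} (hA : A.det = 1) :
    (A ^ 5).trace = A.trace ^ 5 - 5 * A.trace ^ 3 + 5 * A.trace := by
  rw [trace_pow_add_two hA 3, trace_pow_add_two hA 2, trace_pow_three_of_det_one hA,
    trace_pow_two_of_det_one hA]
  ring

lemma pow_five_of_trace {A : Matrix (Fin 2) (Fin 2) K} {t : K} (ht : t ^ 2 + t = 1)
    (hA : A.det = 1) (hAt : A.trace = t) : A ^ 5 = 1 := by
  have h2 := sq_of_det_one hA
  rw [hAt] at h2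
  have hs : t ^ 2 = 1 - t := by linear_combination ht
  have h3 : A ^ 3 = -t • A - t • 1 := by
    rw [pow_succ, h2, sub_mul, smul_mul_assoc, ← pow_two, h2, one_mul, smul_sub, smul_smul,
      ← pow_two, hs]
    module
  rw [show 5 = 3 + 2 from rfl, pow_add, h3, h2, sub_mul, smul_mul_assoc, mul_sub, mul_smul_comm,
    ← pow_two, h2, smul_mul_assoc, one_mul, mul_one]
  match_scalars
  · linear_combination (-t) * ht
  · linear_combination ht

lemma trace_mul_inv (A B : SpecialLinearGroup (Fin 2) K) :
    (A * B⁻¹).1.trace = A.1.trace * B.1.trace - (A * B).1.trace := by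
  simp [adjugate_fin_two, trace_fin_two, mul_apply]
  ring

/-- Let `s = tr C² = 3 - 8 t`. If `C⁴`, `C⁶` or `C¹⁰` is `1`, then either `s = 2`, which is excluded
by `hC4`, or `s = -2`, `s = -1` or `s² + s = 1`, respectively, and none of these agrees with
`t² + t = 1`. -/
lemma pow_ne_one_of_trace {C : SpecialLinearGroup (Fin 2) K} {t : K} (ht : t ^ 2 + t = 1)
    (h3 : (3 : K) ≠ 0) (h2 : (2 : K) ≠ 0) (h5 : (5 : K) ≠ 0)
    (hC : C.1.trace = 1 - 2 * t) (hC4 : C.1.trace ^ 2 ≠ 4) :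
    C ^ 4 ≠ 1 ∧ C ^ 6 ≠ 1 ∧ C ^ 10 ≠ 1 := by
  have hs : (C.1 ^ 2).trace = C.1.trace ^ 2 - 2 := trace_pow_two_of_det_one C.2
  have hd : (C.1 ^ 2).det = 1 := by rw [det_pow, C.2, one_pow]
  have hpow : ∀ n, C ^ (2 * n) = 1 → ((C.1 ^ 2) ^ n).trace = 2 := by
    intro n h
    rw [← pow_mul]
    refine (congrArg trace (Matrix.SpecialLinearGroup.coe_pow C (2 * n))).symm.trans ?_
    rw [h]
    simp
  set s := (C.1 ^ 2).trace with hsdef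
  have hs2 : s - 2 ≠ 0 := fun h => hC4 (by linear_combination h - hs)
  rw [hC] at hs
  have hs' : s = 3 - 8 * t := by linear_combination hs + 4 * ht
  have hhalf : 2 * t - 1 ≠ 0 := by
    intro h
    exact one_ne_zero (α := K) (by linear_combination -4 * ht + (2 * t + 3) * h)
  refine ⟨fun h => ?_, fun h => ?_, fun h => ?_⟩
  · have := hpow 2 h
    rw [trace_pow_two_of_det_one hd, ← hsdef] at this
    have h' : (s - 2) * (s + 2) = 0 := by linear_combination this
    have h'' := (mul_eq_zero.1 h').resolve_left hs2
    have : (1 - 2 * t) ^ 2 = 0 := by linear_combination h'' - hs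
    have := pow_eq_zero_iff (two_ne_zero) |>.1 this
    exact hhalf (by linear_combination -this)
  · have := hpow 3 h
    rw [trace_pow_three_of_det_one hd, ← hsdef] at this
    have h' : (s - 2) * (s + 1) ^ 2 = 0 := by linear_combination this
    have h'' := pow_eq_zero_iff (two_ne_zero) |>.1 ((mul_eq_zero.1 h').resolve_left hs2)
    have : 2 * (2 * (2 * t - 1)) = 0 := by linear_combination hs' - h''
    simp [h2, hhalf] at this
  · have := hpow 5 h
    rw [trace_pow_five_of_det_one hd, ← hsdef] at this
    have h' : (s - 2) * (s ^ 2 + s - 1) ^ 2 = 0 := by linear_combination this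
    have h'' := pow_eq_zero_iff (two_ne_zero) |>.1 ((mul_eq_zero.1 h').resolve_left hs2)
    rw [hs'] at h''
    have : 3 * (5 * (5 - 8 * t)) = 0 := by linear_combination h'' - 64 * ht
    have h8 : 5 - 8 * t = 0 := by simpa [h3, h5] using this
    exact one_ne_zero (α := K) (by linear_combination 64 * ht + (8 * t + 13) * h8)

/-- A representative in `K²` of a point of the projective line `K ∪ {∞}`. -/
def OnePoint.vec (x : OnePoint K) : Fin 2 → K := x.elim ![1, 0] (fun t => ![t, 1])

lemma OnePoint.vec_ne_zero (x : OnePoint K) : x.vec ≠ 0 := by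
  induction x using OnePoint.rec with
  | infty => exact fun h => one_ne_zero (congrFun h 0)
  | coe x => exact fun h => one_ne_zero (congrFun h 1)

end

section
variable {K : Type*} [Field K] [DecidableEq K]

lemma exists_eigenvalue_of_smul_eq {g : GL (Fin 2) K} {x : OnePoint K} (h : g • x = x) :
    ∃ α : K, g.1 *ᵥ x.vec = α • x.vec := by
  induction x using OnePoint.rec with
  | infty =>
    rw [OnePoint.smul_infty_eq_self_iff] at h
    refine ⟨g 0 0, ?_⟩
    ext i
    fin_cases i <;> simp [OnePoint.vec, h]
  | coe x =>
    rw [OnePoint.smul_some_eq_ite] at h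
    split_ifs at h with h0
    · simp at h
    refine ⟨g 1 0 * x + g 1 1, ?_⟩
    rw [OnePoint.coe_eq_coe, div_eq_iff h0] at h
    ext i
    fin_cases i
    · simpa [OnePoint.vec, mul_comm] using h
    · simp [OnePoint.vec]

lemma card_fixedBy_eq_two [IsAlgClosed K] (h2 : (2 : K) ≠ 0) (g : SpecialLinearGroup (Fin 2) K)
    (hg : g.1.trace ^ 2 ≠ 4) :
    Nat.card (MulAction.fixedBy (OnePoint K) (SpecialLinearGroup.toGL g)) = 2 := by
  have hdet := g.2
  rw [det_fin_two] at hdet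
  rw [trace_fin_two] at hg
  have hcoe : ∀ x : K, SpecialLinearGroup.toGL g • (x : OnePoint K) = x ↔
      g.1 1 0 * (x * x) + (g.1 1 1 - g.1 0 0) * x + -g.1 0 1 = 0 := by
    intro x
    rw [← Matrix.GeneralLinearGroup.fixpointPolynomial_aeval_eq_zero_iff]
    simp [Matrix.GeneralLinearGroup.fixpointPolynomial, pow_two, sub_eq_add_neg]
  have hinf : SpecialLinearGroup.toGL g • (OnePoint.infty : OnePoint K) = OnePoint.infty ↔
      g.1 1 0 = 0 := by
    rw [OnePoint.smul_infty_eq_self_iff]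
    simp
  suffices h : ∃ x y : OnePoint K, x ≠ y ∧
      MulAction.fixedBy (OnePoint K) (SpecialLinearGroup.toGL g) = {x, y} by
    obtain ⟨x, y, hxy, h⟩ := h
    rw [h, Nat.card_coe_set_eq, Set.ncard_pair hxy]
  by_cases hc : g.1 1 0 = 0
  · have hd : g.1 1 1 - g.1 0 0 ≠ 0 := by
      intro h
      apply hg
      rw [hc] at hdet
      linear_combination 4 * hdet + (g.1 1 1 - g.1 0 0) * h
    refine ⟨OnePoint.infty, ((g.1 0 1 / (g.1 1 1 - g.1 0 0) : K) : OnePoint K), by simp, ?_⟩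
    ext x
    induction x using OnePoint.rec with
    | infty => simpa [hinf] using hc
    | coe x =>
      rw [MulAction.mem_fixedBy, hcoe, hc]
      simp [eq_div_iff hd, add_neg_eq_zero, mul_comm]
  · obtain ⟨s, hs⟩ := IsAlgClosed.exists_pow_nat_eq ((g.1 0 0 + g.1 1 1) ^ 2 - 4) (n := 2)
      (by norm_num)
    have : NeZero (2 : K) := ⟨h2⟩
    have hdisc : discrim (g.1 1 0) (g.1 1 1 - g.1 0 0) (-g.1 0 1) = s * s := by
      rw [discrim]
      linear_combination -hs - 4 * hdet
    refine ⟨((-(g.1 1 1 - g.1 0 0) + s) / (2 * g.1 1 0) : K),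
      ((-(g.1 1 1 - g.1 0 0) - s) / (2 * g.1 1 0) : K), ?_, ?_⟩
    rotate_left
    · ext x
      induction x using OnePoint.rec with
      | infty => simpa [hinf] using hc
      | coe x =>
        rw [MulAction.mem_fixedBy, hcoe, quadratic_eq_zero_iff hc hdisc, Set.mem_insert_iff,
          Set.mem_singleton_iff, OnePoint.coe_eq_coe, OnePoint.coe_eq_coe]
    · rw [Ne, OnePoint.coe_eq_coe, div_left_inj' (mul_ne_zero h2 hc)]
      intro h
      have : s = 0 := by
        have : 2 * s = 0 := by linear_combination h
        simpa [h2] using this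
      rw [this] at hs
      apply hg
      linear_combination -hs

/-- A finite group `G ⊆ SL₂(K)` containing `-1` and a pair `a, b` with `tr a = tr b = tr ab = t` has
an element of trace `±2` other than `±1`: otherwise all elements except `±1` fix exactly two points
of the projective line, against `no_platonic_action'`, applied with `c = a b⁻¹`. -/
lemma exists_trace_sq_eq_four [IsAlgClosed K] (h2 : (2 : K) ≠ 0) (h3 : (3 : K) ≠ 0)
    (h5 : (5 : K) ≠ 0) {G : Type*} [Group G] [Finite G] (ρ : G →* SpecialLinearGroup (Fin 2) K)
    (hρ : Function.Injective ρ) (z a b : G) (hz : ρ z = -1) {t : K} (ht : t ^ 2 + t = 1)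
    (ha : (ρ a).1.trace = t) (hb : (ρ b).1.trace = t) (hab : (ρ (a * b)).1.trace = t) :
    ∃ g : G, g ≠ 1 ∧ g ≠ z ∧ (ρ g).1.trace ^ 2 = 4 := by
  by_contra! hcon
  let : MulAction G (OnePoint K) :=
    MulAction.compHom _ ((SpecialLinearGroup.toGL (n := Fin 2) (R := K)).comp ρ)
  have hsmul : ∀ (g : G) (x : OnePoint K), g • x = SpecialLinearGroup.toGL (ρ g) • x :=
    fun g x => rfl
  have htr : ∀ g, g = z → (ρ g).1.trace = -2 := by
    rintro g rfl
    rw [hz]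
    simp
  have htr1 : ∀ g, g = 1 → (ρ g).1.trace = 2 := by
    rintro g rfl
    simp
  have h1t : t ≠ 2 := by
    rintro rfl
    exact h5 (by linear_combination ht)
  have ht0 : t ≠ 0 := by
    rintro rfl
    exact one_ne_zero (α := K) (by linear_combination -ht)
  have hzz : z ^ 2 = 1 := hρ (by rw [map_pow, hz, map_one]; exact neg_one_sq)
  have hcomm : ∀ g, g * z = z * g := fun g => hρ (by rw [map_mul, map_mul, hz]; simp)
  have hpow5 : ∀ g, (ρ g).1.trace = t → g ^ 5 = 1 := fun g hg => hρ (by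
    rw [map_pow, map_one]
    exact Subtype.ext
      ((Matrix.SpecialLinearGroup.coe_pow _ _).trans (pow_five_of_trace ht (ρ g).2 hg)))
  have hcz : a * b⁻¹ ≠ z := by
    intro h
    have h' : a = z * b := by rw [← h, inv_mul_cancel_right]
    rw [h', map_mul, hz, neg_mul, one_mul, Matrix.SpecialLinearGroup.coe_neg, trace_neg, hb] at ha
    have : 2 * t = 0 := by linear_combination -ha
    simp [h2, ht0] at this
  have htrc : (ρ (a * b⁻¹)).1.trace = 1 - 2 * t := by
    rw [map_mul] at hab
    rw [map_mul, map_inv, trace_mul_inv, ha, hb, hab]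
    linear_combination ht
  have hc1 : a * b⁻¹ ≠ 1 := by
    intro h
    have := htr1 _ h
    rw [htrc] at this
    exact h5 (by linear_combination -4 * ht + (-1 - 2 * t) * this)
  obtain ⟨h4, h6, h10⟩ := pow_ne_one_of_trace ht h3 h2 h5 htrc (hcon _ hc1 hcz)
  refine no_platonic_action' (X := OnePoint K) z ?_ hzz hcomm ?_ ?_ a b (a * b⁻¹) ?_ ?_
    (hpow5 a ha) (hpow5 b hb) ?_ ?_ ?_ ?_
  · intro h
    have h' := htr1 z h
    rw [htr z rfl] at h'
    have : (2 : K) * 2 = 0 := by linear_combination -h'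
    simp [h2] at this
  · intro x
    rw [hsmul, hz]
    induction x using OnePoint.rec with
    | infty => rw [OnePoint.smul_infty_eq_self_iff]; simp
    | coe x => rw [OnePoint.smul_some_eq_ite]; simp
  · intro g h1 h2'
    exact card_fixedBy_eq_two h2 (ρ g) (hcon g h1 h2')
  · intro h
    exact h1t (ha.symm.trans (htr1 a h))
  · intro h
    have := ha.symm.trans (htr a h)
    rw [this] at ht
    exact one_ne_zero (α := K) (by linear_combination ht)
  · exact fun h => h4 (by rw [← map_pow, h, map_one])
  · exact fun h => h6 (by rw [← map_pow, h, map_one])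
  · exact fun h => h10 (by rw [← map_pow, h, map_one])
  · intro x hxa hxb
    obtain ⟨α, hα⟩ := exists_eigenvalue_of_smul_eq ((hsmul a x).symm.trans hxa)
    obtain ⟨β, hβ⟩ := exists_eigenvalue_of_smul_eq ((hsmul b x).symm.trans hxb)
    rw [map_mul] at hab
    exact no_common_eigenvector_s14 ht h5 (ρ a).2 (ρ b).2 ha hb hab x.vec_ne_zero hα hβ
end

local notation "SL₂(" R ")" => Matrix.SpecialLinearGroup (Fin 2) R

/-! ### Generation of the special linear group -/

section
variable {K : Type*} [Field K]

lemma sl_neg_mul_self (g : SL₂(K)) : (-g) * (-g) = g * g := by simp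

/-- The subgroup `{±1} H`. -/
def negSpan (H : Subgroup SL₂(K)) : Subgroup SL₂(K) where
  carrier := {g | g ∈ H ∨ -g ∈ H}
  one_mem' := Or.inl H.one_mem
  mul_mem' := by
    rintro a b (ha | ha) (hb | hb)
    · exact Or.inl (H.mul_mem ha hb)
    · exact Or.inr (by simpa using H.mul_mem ha hb)
    · exact Or.inr (by simpa using H.mul_mem ha hb)
    · exact Or.inl (by simpa using H.mul_mem ha hb)
  inv_mem' := by
    rintro a (ha | ha)
    · exact Or.inl (H.inv_mem ha)
    · refine Or.inr ?_
      have : (-a)⁻¹ = -a⁻¹ := by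
        rw [inv_eq_iff_mul_eq_one]; simp
      rw [← this]
      exact H.inv_mem ha

/-- Over the algebraic closure, `{±1}H` contains some `g ≠ ±1` with trace `±2`; then `±g ∈ H`, and
`u = g²` is a nontrivial unipotent. -/
lemma exists_unipotent [Finite K] (h2 : (2 : K) ≠ 0) (h3 : (3 : K) ≠ 0) (h5 : (5 : K) ≠ 0)
    {t : K} (ht : t ^ 2 + t = 1) (H : Subgroup SL₂(K)) {a b : SL₂(K)} (haH : a ∈ H) (hbH : b ∈ H)
    (ha : a.1.trace = t) (hb : b.1.trace = t) (hab : (a * b).1.trace = t) :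
    ∃ u ∈ H, u ≠ 1 ∧ u.1.trace = 2 := by
  classical
  let L := AlgebraicClosure K
  let f := algebraMap K L
  have hf : Function.Injective f := f.injective
  let ρ : negSpan H →* SL₂(L) := (SpecialLinearGroup.map f).comp (negSpan H).subtype
  have hρ : Function.Injective ρ := by
    intro x y hxy
    ext i j
    exact hf (congrFun (congrFun (congrArg Subtype.val hxy) i) j)
  have htr : ∀ g, (ρ g).1.trace = f g.1.1.trace := by
    intro g
    rw [trace_fin_two, trace_fin_two, map_add]
    rfl
  have hnum : ∀ n : ℕ, (n : K) ≠ 0 → (n : L) ≠ 0 := by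
    intro n hn h
    exact hn (hf (by rw [map_natCast, map_zero, h]))
  have hρz : ρ ⟨-1, Or.inr (by simp)⟩ = -1 := by
    ext i j
    fin_cases i <;> fin_cases j <;> simp [ρ, f]
  obtain ⟨⟨g, hg⟩, hg1, hgz, hgt⟩ := exists_trace_sq_eq_four
    (by exact_mod_cast hnum 2 (by exact_mod_cast h2))
    (by exact_mod_cast hnum 3 (by exact_mod_cast h3))
    (by exact_mod_cast hnum 5 (by exact_mod_cast h5)) ρ hρ ⟨-1, Or.inr (by simp)⟩
    ⟨a, Or.inl haH⟩ ⟨b, Or.inl hbH⟩ hρz (t := f t)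
    (by rw [← map_pow, ← map_add, ht, map_one]) (by rw [htr]; exact congrArg f ha)
    (by rw [htr]; exact congrArg f hb) (by rw [htr]; exact congrArg f hab)
  have hgt' : g.1.trace ^ 2 = 4 := by
    rw [htr, ← map_pow] at hgt
    exact hf (hgt.trans (map_ofNat f 4).symm)
  have hg1' : g ≠ 1 := fun h => hg1 (Subtype.ext h)
  have hgz' : g ≠ -1 := fun h => hgz (Subtype.ext h)
  have hsq : (g * g).1 = g.1.trace • g.1 - 1 := by
    rw [← sq_of_det_one g.2, pow_two]
    exact Matrix.SpecialLinearGroup.coe_mul g g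
  refine ⟨g * g, ?_, ?_, ?_⟩
  · rcases hg with h | h
    · exact H.mul_mem h h
    · rw [← sl_neg_mul_self]
      exact H.mul_mem h h
  · intro h
    rw [h] at hsq
    have h4 : (g.1.trace - 2) * (g.1.trace + 2) = 0 := by linear_combination hgt'
    have key : ∀ i j, g.1.trace * g.1 i j = 2 * (1 : Matrix (Fin 2) (Fin 2) K) i j := by
      intro i j
      have := congrFun (congrFun hsq i) j
      rw [Matrix.sub_apply, Matrix.smul_apply, smul_eq_mul] at this
      have h1 : ((1 : SL₂(K)).1 i j) = (1 : Matrix (Fin 2) (Fin 2) K) i j := rfl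
      linear_combination -this + h1
    rcases mul_eq_zero.1 h4 with h | h
    · apply hg1'
      ext i j
      refine mul_left_cancel₀ h2 ?_
      have h1 : ((1 : SL₂(K)) : Matrix (Fin 2) (Fin 2) K) i j
        = (1 : Matrix (Fin 2) (Fin 2) K) i j := rfl
      rw [h1]
      linear_combination key i j - g.1 i j * h
    · apply hgz'
      ext i j
      refine mul_left_cancel₀ h2 ?_
      have h1 : ((-1 : SL₂(K)) : Matrix (Fin 2) (Fin 2) K) i j
        = -(1 : Matrix (Fin 2) (Fin 2) K) i j := rfl
      rw [h1]
      linear_combination -key i j + g.1 i j * h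
  · rw [hsq, trace_sub, trace_smul, smul_eq_mul, trace_one, Fintype.card_fin]
    push_cast
    linear_combination hgt'

/-- The upper unitriangular matrix. -/
def upper (s : K) : SL₂(K) := ⟨!![1, s; 0, 1], by simp⟩

/-- The lower unitriangular matrix. -/
def lower (s : K) : SL₂(K) := ⟨!![1, 0; s, 1], by simp⟩

lemma upper_coe (s : K) : (upper s : Matrix (Fin 2) (Fin 2) K) = !![1, s; 0, 1] := rfl

lemma lower_coe (s : K) : (lower s : Matrix (Fin 2) (Fin 2) K) = !![1, 0; s, 1] := rfl

lemma upper_pow (s : K) (n : ℕ) : upper s ^ n = upper (n * s) := by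
  induction n with
  | zero => ext i j; fin_cases i <;> fin_cases j <;> simp [upper_coe]
  | succ n ih =>
    rw [pow_succ, ih]
    ext i j
    fin_cases i <;> fin_cases j <;> simp [upper_coe, mul_apply] ; ring

lemma lower_pow (s : K) (n : ℕ) : lower s ^ n = lower (n * s) := by
  induction n with
  | zero => ext i j; fin_cases i <;> fin_cases j <;> simp [lower_coe]
  | succ n ih =>
    rw [pow_succ, ih]
    ext i j
    fin_cases i <;> fin_cases j <;> simp [lower_coe, mul_apply] ; ring

lemma eq_upper {M : SL₂(K)} (h0 : M.1 0 0 = 1) (h1 : M.1 1 0 = 0) : M = upper (M.1 0 1) := by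
  have hd := M.2
  rw [det_fin_two, h0, h1] at hd
  ext i j
  fin_cases i <;> fin_cases j
  · exact h0
  · rfl
  · exact h1
  · change M.1 1 1 = 1
    linear_combination hd

lemma eq_lower {M : SL₂(K)} (h0 : M.1 1 1 = 1) (h1 : M.1 0 1 = 0) : M = lower (M.1 1 0) := by
  have hd := M.2
  rw [det_fin_two, h0, h1] at hd
  ext i j
  fin_cases i <;> fin_cases j
  · change M.1 0 0 = 1
    linear_combination hd
  · exact h1
  · rfl
  · exact h0

/-- A matrix with nonzero lower left entry is a product of three transvections; multiplying by
`lower 1` reduces the other matrices to this case. -/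
lemma eq_top_of_forall_upper_lower {H : Subgroup SL₂(K)} (hu : ∀ s, upper s ∈ H)
    (hl : ∀ s, lower s ∈ H) : H = ⊤ := by
  have key : ∀ M : SL₂(K), M.1 1 0 ≠ 0 → M ∈ H := by
    intro M hM
    have : M = upper ((M.1 0 0 - 1) / M.1 1 0) * lower (M.1 1 0) *
        upper ((M.1 1 1 - 1) / M.1 1 0) := by
      have hd := M.2
      rw [det_fin_two] at hd
      ext i j
      fin_cases i <;> fin_cases j <;> simp [upper_coe, lower_coe, mul_apply] <;> field_simp <;>
        first | ring1 | linear_combination -hd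
    rw [this]
    exact H.mul_mem (H.mul_mem (hu _) (hl _)) (hu _)
  rw [Subgroup.eq_top_iff']
  intro M
  by_cases hM : M.1 1 0 = 0
  · have h0 : M.1 0 0 ≠ 0 := by
      intro h
      have hd := M.2
      rw [det_fin_two, hM, h] at hd
      simp at hd
    have := key (lower 1 * M) (by simpa [lower_coe, mul_apply, hM] using h0)
    exact (H.mul_mem_cancel_left (hl 1)).1 this
  · exact key M hM

lemma eq_top_of_upper_lower {p : ℕ} [Fact p.Prime] {H : Subgroup SL₂(ZMod p)} {x y : ZMod p}
    (hx : x ≠ 0) (hy : y ≠ 0) (hu : upper x ∈ H) (hl : lower y ∈ H) : H = ⊤ := by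
  refine eq_top_of_forall_upper_lower (fun s => ?_) (fun s => ?_)
  · have := H.pow_mem hu (s / x).val
    rwa [upper_pow, ZMod.natCast_zmod_val, div_mul_cancel₀ _ hx] at this
  · have := H.pow_mem hl (s / y).val
    rwa [lower_pow, ZMod.natCast_zmod_val, div_mul_cancel₀ _ hy] at this

/-- Independent vectors `v`, `w` are, after rescaling `w`, the columns of a matrix of determinant
`1`. -/
lemma exists_basis {v w : Fin 2 → K} (hv : v ≠ 0) (hw : ∀ α : K, w ≠ α • v) :
    ∃ (P : SL₂(K)) (d : K), P.1 *ᵥ ![1, 0] = v ∧ P.1 *ᵥ ![0, 1] = d • w := by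
  have hd : v 0 * w 1 - v 1 * w 0 ≠ 0 := by
    intro h
    by_cases h0 : v 0 = 0
    · have h1 : v 1 ≠ 0 := by
        intro h1
        exact hv (by ext i; fin_cases i <;> simp [h0, h1])
      apply hw (w 1 / v 1)
      rw [h0, zero_mul, zero_sub, neg_eq_zero] at h
      have h' := (mul_eq_zero.1 h).resolve_left h1
      ext i
      fin_cases i <;> simp [h0, h1, h']
    · apply hw (w 0 / v 0)
      ext i
      fin_cases i
      · simp [h0]
      · simp only [Fin.mk_one, Pi.smul_apply, smul_eq_mul]
        field_simp
        linear_combination h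
  refine ⟨⟨!![v 0, w 0 / (v 0 * w 1 - v 1 * w 0); v 1, w 1 / (v 0 * w 1 - v 1 * w 0)], ?_⟩,
    (v 0 * w 1 - v 1 * w 0)⁻¹, ?_, ?_⟩
  · rw [det_fin_two_of]
    field_simp
  · ext i; fin_cases i <;> simp
  · ext i; fin_cases i <;> simp [div_eq_inv_mul]

lemma conj_mulVec {P A : SL₂(K)} {e v : Fin 2 → K} {α : K} (he : P.1 *ᵥ e = v)
    (hv : A.1 *ᵥ v = α • v) : (P⁻¹ * A * P).1 *ᵥ e = α • e := by
  have h1 : (P⁻¹ * A * P).1 = P⁻¹.1 * A.1 * P.1 := by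
    simp
  have h2 : P⁻¹.1 * P.1 = 1 := by
    have := congrArg Subtype.val (inv_mul_cancel P)
    exact this
  rw [h1, ← mulVec_mulVec, he, ← mulVec_mulVec, hv, mulVec_smul, ← he, mulVec_mulVec, h2,
    one_mulVec]

/-- The unipotents `u` and `g u g⁻¹` fix `v` and `g v`. In a basis proportional to these two vectors
they are an upper and a lower transvection. -/
lemma eq_top_of_unipotent {p : ℕ} [Fact p.Prime] {H : Subgroup SL₂(ZMod p)} {g u : SL₂(ZMod p)}
    (hg : g ∈ H) (hu : u ∈ H) (hu1 : u ≠ 1) {v : Fin 2 → ZMod p} (hv : v ≠ 0)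
    (huv : u.1 *ᵥ v = v) (hgv : ∀ α : ZMod p, g.1 *ᵥ v ≠ α • v) : H = ⊤ := by
  obtain ⟨P, d, h0, h1⟩ := exists_basis hv hgv
  have e0 := conj_mulVec h0 (huv.trans (one_smul _ v).symm)
  have e1 : (P⁻¹ * (g * u * g⁻¹) * P).1 *ᵥ ![0, 1] = (1 : ZMod p) • ![0, 1] := by
    refine conj_mulVec h1 ?_
    have h2 : (g * u * g⁻¹).1 * g.1 = g.1 * u.1 := by
      have := congrArg Subtype.val (inv_mul_cancel_right (g * u) g)
      exact this
    rw [mulVec_smul, mulVec_mulVec, h2, ← mulVec_mulVec, huv, one_smul]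
  have c0 := eq_upper (M := P⁻¹ * u * P) (by simpa using congrFun e0 0)
    (by simpa using congrFun e0 1)
  have c1 := eq_lower (M := P⁻¹ * (g * u * g⁻¹) * P) (by simpa using congrFun e1 1)
    (by simpa using congrFun e1 0)
  have hx : (P⁻¹ * u * P).1 0 1 ≠ 0 := by
    intro h
    rw [h] at c0
    apply hu1
    have : upper (0 : ZMod p) = 1 := by
      ext i j; fin_cases i <;> fin_cases j <;> simp [upper]
    rw [this] at c0
    simpa [mul_eq_one_iff_eq_inv] using c0
  have hy : (P⁻¹ * (g * u * g⁻¹) * P).1 1 0 ≠ 0 := by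
    intro h
    rw [h] at c1
    apply hu1
    have : lower (0 : ZMod p) = 1 := by
      ext i j; fin_cases i <;> fin_cases j <;> simp [lower]
    rw [this] at c1
    simpa [mul_eq_one_iff_eq_inv] using c1
  have hcon : ∀ k, k ∈ H.comap (MulAut.conj P).toMonoidHom ↔ P * k * P⁻¹ ∈ H := fun k => by simp
  have htop : H.comap (MulAut.conj P).toMonoidHom = ⊤ := by
    refine eq_top_of_upper_lower hx hy ?_ ?_
    · rw [← c0, hcon]
      simpa [mul_assoc] using hu
    · rw [← c1, hcon]
      have := H.mul_mem (H.mul_mem hg hu) (H.inv_mem hg)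
      simpa [mul_assoc] using this
  rw [Subgroup.eq_top_iff']
  intro k
  have : P⁻¹ * k * P ∈ H.comap (MulAut.conj P).toMonoidHom := by rw [htop]; trivial
  rw [hcon] at this
  simpa [mul_assoc] using this

/-- Any pair with `tr a = tr b = tr ab = t`, where `t² + t = 1`, generates `SL₂(𝔽_p)`. -/
lemma eq_top_of_trace {p : ℕ} [Fact p.Prime] (hp5 : 5 < p) {t : ZMod p} (ht : t ^ 2 + t = 1)
    (H : Subgroup SL₂(ZMod p)) {a b : SL₂(ZMod p)} (haH : a ∈ H) (hbH : b ∈ H)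
    (ha : a.1.trace = t) (hb : b.1.trace = t) (hab : (a * b).1.trace = t) : H = ⊤ := by
  have hnum : ∀ n : ℕ, 0 < n → n < p → (n : ZMod p) ≠ 0 := by
    intro n h0 hn h
    rw [ZMod.natCast_eq_zero_iff] at h
    exact absurd (Nat.le_of_dvd h0 h) (by omega)
  have h5 : (5 : ZMod p) ≠ 0 := by exact_mod_cast hnum 5 (by omega) (by omega)
  obtain ⟨u, huH, hu1, hut⟩ := exists_unipotent
    (by exact_mod_cast hnum 2 (by omega) (by omega))
    (by exact_mod_cast hnum 3 (by omega) (by omega)) h5 ht H haH hbH ha hb hab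
  obtain ⟨v, hv, huv⟩ : ∃ v : Fin 2 → ZMod p, v ≠ 0 ∧ u.1 *ᵥ v = v := by
    have hd := u.2
    rw [det_fin_two] at hd
    rw [trace_fin_two] at hut
    have : (u.1 - 1).det = 0 := by
      rw [det_fin_two]
      simp only [Matrix.sub_apply, one_apply_eq, ne_eq, zero_ne_one,
        not_false_eq_true, one_apply_ne, sub_zero, one_ne_zero]
      linear_combination hd - hut
    obtain ⟨v, hv, h⟩ := exists_mulVec_eq_zero_iff.2 this
    exact ⟨v, hv, by rwa [sub_mulVec, one_mulVec, sub_eq_zero] at h⟩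
  by_cases hav : ∃ α : ZMod p, a.1 *ᵥ v = α • v
  · by_cases hbv : ∃ β : ZMod p, b.1 *ᵥ v = β • v
    · obtain ⟨α, hα⟩ := hav
      obtain ⟨β, hβ⟩ := hbv
      exact (no_common_eigenvector_s14 ht h5 a.2 b.2 ha hb
        ((congrArg trace (Matrix.SpecialLinearGroup.coe_mul a b)).symm.trans hab) hv hα hβ).elim
    · exact eq_top_of_unipotent hbH huH hu1 hv huv (fun α h => hbv ⟨α, h⟩)
  · exact eq_top_of_unipotent haH huH hu1 hv huv (fun α h => hav ⟨α, h⟩)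
end

/-! ### Normal forms and square classes -/

section
variable {K : Type*} [Field K]

lemma exists_eigenvector_s14 {A : SL₂(K)} {α : K} (h : α ^ 2 - A.1.trace * α + 1 = 0) :
    ∃ v : Fin 2 → K, v ≠ 0 ∧ A.1 *ᵥ v = α • v := by
  have hd := A.2
  rw [det_fin_two] at hd
  rw [trace_fin_two] at h
  have : (A.1 - α • (1 : Matrix (Fin 2) (Fin 2) K)).det = 0 := by
    rw [det_fin_two]
    simp only [Matrix.sub_apply, Matrix.smul_apply, one_apply_eq, smul_eq_mul, mul_one, ne_eq,
      zero_ne_one, not_false_eq_true, one_apply_ne, mul_zero, sub_zero, one_ne_zero]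
    linear_combination hd + h
  obtain ⟨v, hv, h⟩ := exists_mulVec_eq_zero_iff.2 this
  exact ⟨v, hv, by rwa [sub_mulVec, smul_mulVec, one_mulVec, sub_eq_zero] at h⟩

lemma trace_inv_sl (A : SL₂(K)) : A⁻¹.1.trace = A.1.trace := by
  simp [adjugate_fin_two, trace_fin_two, add_comm]

lemma trace_conj_sl (h A : SL₂(K)) : (h * A * h⁻¹).1.trace = A.1.trace := by
  have e : (h * A * h⁻¹).1 = h.1 * A.1 * h⁻¹.1 := by simp
  have e2 : h⁻¹.1 * h.1 = 1 := congrArg Subtype.val (inv_mul_cancel h)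
  rw [e, trace_mul_comm, ← Matrix.mul_assoc, e2, one_mul]

/-- The diagonal matrix `diag(s, s⁻¹)`. -/
def torus (s : K) (hs : s ≠ 0) : SL₂(K) := ⟨!![s, 0; 0, s⁻¹], by simp [hs]⟩

lemma torus_coe (s : K) (hs : s ≠ 0) :
    (torus s hs : Matrix (Fin 2) (Fin 2) K) = !![s, 0; 0, s⁻¹] := rfl

/-- The matrix of determinant `1` with diagonal entries `x`, `w` and upper right entry `y ≠ 0`;
these determine the lower left entry. -/
def bMat (x w y : K) (hy : y ≠ 0) : SL₂(K) :=
  ⟨!![x, y; (x * w - 1) / y, w], by rw [det_fin_two_of]; field_simp; ring⟩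

lemma bMat_coe (x w y : K) (hy : y ≠ 0) :
    (bMat x w y hy : Matrix (Fin 2) (Fin 2) K) = !![x, y; (x * w - 1) / y, w] := rfl

lemma eq_bMat {B : SL₂(K)} (hy : B.1 0 1 ≠ 0) : B = bMat (B.1 0 0) (B.1 1 1) (B.1 0 1) hy := by
  have hd := B.2
  rw [det_fin_two] at hd
  ext i j
  fin_cases i <;> fin_cases j
  · rfl
  · rfl
  · change B.1 1 0 = (B.1 0 0 * B.1 1 1 - 1) / B.1 0 1
    rw [eq_div_iff hy]
    linear_combination -hd
  · rfl

lemma torus_conj_torus (s z : K) (hs : s ≠ 0) (hz : z ≠ 0) :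
    torus s hs * torus z hz * (torus s hs)⁻¹ = torus z hz := by
  rw [mul_inv_eq_iff_eq_mul]
  ext i j
  fin_cases i <;> fin_cases j <;> simp [torus_coe, mul_apply, mul_comm]

lemma torus_conj_bMat (s x w y : K) (hs : s ≠ 0) (hy : y ≠ 0) :
    torus s hs * bMat x w y hy * (torus s hs)⁻¹ =
      bMat x w (s ^ 2 * y) (mul_ne_zero (pow_ne_zero 2 hs) hy) := by
  rw [mul_inv_eq_iff_eq_mul]
  ext i j
  fin_cases i <;> fin_cases j <;> simp [torus_coe, bMat_coe, mul_apply] <;> field_simp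

/-- A matrix `h` that commutes with `diag(z, z⁻¹)` is diagonal, so conjugation by it multiplies the
upper right entry by a square. -/
lemma exists_sq_mul_of_conj {z x w y y' : K} (hz : z ≠ 0) (hz2 : z ≠ z⁻¹) (hy : y ≠ 0)
    (hy' : y' ≠ 0) (h : SL₂(K)) (hD : torus z hz = h * torus z hz * h⁻¹)
    (hB : bMat x w y' hy' = h * bMat x w y hy * h⁻¹) : ∃ r, r ≠ 0 ∧ y' = r ^ 2 * y := by
  rw [eq_mul_inv_iff_mul_eq] at hD hB
  have e01 := congrFun (congrFun (congrArg Subtype.val hD) 0) 1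
  have e10 := congrFun (congrFun (congrArg Subtype.val hD) 1) 0
  have f01 := congrFun (congrFun (congrArg Subtype.val hB) 0) 1
  simp [torus_coe, bMat_coe, mul_apply] at e01 e10 f01
  have h01 : h.1 0 1 = 0 := by
    have : (z - z⁻¹) * h.1 0 1 = 0 := by linear_combination e01
    exact (mul_eq_zero.1 this).resolve_left (sub_ne_zero.2 hz2)
  have hd := h.2
  rw [det_fin_two, h01, zero_mul, sub_zero] at hd
  rw [h01] at f01
  have h0 : h.1 0 0 ≠ 0 := left_ne_zero_of_mul_eq_one hd
  refine ⟨h.1 0 0, h0, ?_⟩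
  linear_combination (-y') * hd + h.1 0 0 * f01
end

section
/-- In a basis of eigenvectors of `a`, the matrix `a` becomes `diag(z, z⁻¹)`; the diagonal entries
of `b` are then the solution of the linear system `x + w = z x + z⁻¹ w = z + z⁻¹`, and its upper
right entry is nonzero because the second basis vector is not an eigenvector of `b`. -/
lemma exists_normal_form {K : Type*} [Field K] (h5 : (5 : K) ≠ 0) {z : K} (hz : z ≠ 0)
    (hz2 : z ≠ z⁻¹) (ht : (z + z⁻¹) ^ 2 + (z + z⁻¹) = 1) {a b : SL₂(K)}
    (ha : a.1.trace = z + z⁻¹) (hb : b.1.trace = z + z⁻¹) (hab : (a * b).1.trace = z + z⁻¹) :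
    ∃ (h : SL₂(K)) (y : K) (hy : y ≠ 0), h * a * h⁻¹ = torus z hz ∧
      h * b * h⁻¹ = bMat ((z + z⁻¹ - z⁻¹ * (z + z⁻¹)) / (z - z⁻¹))
        ((z * (z + z⁻¹) - (z + z⁻¹)) / (z - z⁻¹)) y hy := by
  have hzi : z * z⁻¹ = 1 := mul_inv_cancel₀ hz
  have hzd : z - z⁻¹ ≠ 0 := sub_ne_zero.2 hz2
  obtain ⟨v, hv, hav⟩ := exists_eigenvector_s14 (A := a) (α := z)
    (by rw [ha]; linear_combination -hzi)
  obtain ⟨w, hw, haw⟩ := exists_eigenvector_s14 (A := a) (α := z⁻¹)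
    (by rw [ha]; linear_combination -hzi)
  have hvw : ∀ α : K, w ≠ α • v := by
    rintro α rfl
    rw [mulVec_smul, hav, smul_comm] at haw
    have : (z - z⁻¹) • (α • v) = 0 := by rw [sub_smul, haw, sub_self]
    exact hw ((smul_eq_zero.1 this).resolve_left hzd)
  obtain ⟨P, d, h0, h1⟩ := exists_basis hv hvw
  have e0 := conj_mulVec h0 hav
  have e1 := conj_mulVec h1 (A := a) (α := z⁻¹) (by rw [mulVec_smul, haw, smul_comm])
  have hA : P⁻¹ * a * P⁻¹⁻¹ = torus z hz := by
    rw [inv_inv]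
    have e00 := congrFun e0 0
    have e01 := congrFun e0 1
    have e10 := congrFun e1 0
    have e11 := congrFun e1 1
    ext i j
    fin_cases i <;> fin_cases j
    · simpa [torus_coe] using e00
    · simpa [torus_coe] using e10
    · simpa [torus_coe] using e01
    · simpa [torus_coe] using e11
  have hbt : (P⁻¹ * b * P⁻¹⁻¹).1.trace = z + z⁻¹ := (trace_conj_sl _ _).trans hb
  have habt : (torus z hz * (P⁻¹ * b * P⁻¹⁻¹)).1.trace = z + z⁻¹ := by
    have : P⁻¹ * a * P⁻¹⁻¹ * (P⁻¹ * b * P⁻¹⁻¹) = P⁻¹ * (a * b) * P⁻¹⁻¹ := by group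
    rw [← hA, this, trace_conj_sl, hab]
  generalize hB : P⁻¹ * b * P⁻¹⁻¹ = B at hbt habt
  have hBe : (torus z hz * B).1 = (torus z hz).1 * B.1 := Matrix.SpecialLinearGroup.coe_mul _ _
  have habt' := habt
  rw [hBe, trace_fin_two] at habt'
  simp [torus_coe, mul_apply] at habt'
  have hbt' := hbt
  rw [trace_fin_two] at hbt'
  have hDt : (torus z hz).1.trace = z + z⁻¹ := by simp [torus_coe, trace_fin_two]
  have hy : B.1 0 1 ≠ 0 := by
    intro hy
    refine no_common_eigenvector_s14 (v := ![0, 1]) (α := z⁻¹) (β := B.1 1 1) ht h5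
      (torus z hz).2 B.2 hDt hbt (by rw [← hBe]; exact habt) ?_ ?_ ?_
    · exact fun h => one_ne_zero (congrFun h 1)
    · ext i; fin_cases i <;> simp [torus_coe]
    · ext i; fin_cases i <;> simp [hy]
  refine ⟨P⁻¹, B.1 0 1, hy, hA, ?_⟩
  have hx : (z + z⁻¹ - z⁻¹ * (z + z⁻¹)) / (z - z⁻¹) = B.1 0 0 := by
    rw [div_eq_iff hzd]
    linear_combination z⁻¹ * hbt' - habt'
  have hw : (z * (z + z⁻¹) - (z + z⁻¹)) / (z - z⁻¹) = B.1 1 1 := by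
    rw [div_eq_iff hzd]
    linear_combination -z * hbt' + habt'
  rw [hB]
  simp only [hx, hw]
  exact eq_bMat hy

lemma exists_normal_form_mod_squares {K : Type*} [Field K] [Finite K] {e : K}
    (he : ¬ IsSquare e) (y : K) (hy : y ≠ 0) :
    ∃ r, r ≠ 0 ∧ (r ^ 2 * y = 1 ∨ r ^ 2 * y = e) := by
  classical
  have := Fintype.ofFinite K
  have he0 : e ≠ 0 := by rintro rfl; exact he (IsSquare.zero)
  by_cases hs : IsSquare y
  · obtain ⟨r, rfl⟩ := hs
    have hr := left_ne_zero_of_mul hy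
    exact ⟨r⁻¹, inv_ne_zero hr, Or.inl (by field_simp)⟩
  · have hq : quadraticChar K (y * e) = 1 := by
      rw [map_mul, quadraticChar_neg_one_iff_not_isSquare.2 hs,
        quadraticChar_neg_one_iff_not_isSquare.2 he]
      rfl
    obtain ⟨r, hr⟩ := (quadraticChar_one_iff_isSquare (mul_ne_zero hy he0)).1 hq
    have hr0 : r ≠ 0 := by rintro rfl; simp [hy, he0] at hr
    refine ⟨r / y, div_ne_zero hr0 hy, Or.inr ?_⟩
    field_simp
    linear_combination -hr

/-- The two classes are represented by the triples with `y = 1` and with `y = e`, a nonsquare. -/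
lemma card_Ni {p : ℕ} [Fact p.Prime] (hp5 : 5 < p) {z : ZMod p} (hz : z ≠ 0)
    (ht : (z + z⁻¹) ^ 2 + (z + z⁻¹) = 1) {C : Set SL₂(ZMod p)}
    (hC : ∀ A, A ∈ C ↔ A.1.trace = z + z⁻¹) : Nat.card (Ni C C C) = 2 := by
  have hnum : ∀ n : ℕ, 0 < n → n < p → (n : ZMod p) ≠ 0 := by
    intro n h0 hn h
    rw [ZMod.natCast_eq_zero_iff] at h
    exact absurd (Nat.le_of_dvd h0 h) (by omega)
  have h5 : (5 : ZMod p) ≠ 0 := by exact_mod_cast hnum 5 (by omega) (by omega)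
  have h2 : ringChar (ZMod p) ≠ 2 := by
    rw [ZMod.ringChar_zmod_n]; omega
  have hzi : z * z⁻¹ = 1 := mul_inv_cancel₀ hz
  have hz2 : z ≠ z⁻¹ := by
    intro h
    -- Here `z² = 1` and `4 z² + 2 z = 1`, so that `2 z = -3` and `4 = 9`.
    rw [← h] at ht hzi
    exact h5 (by linear_combination (3 - 2 * z) * ht + (8 * z - 8) * hzi)
  have hzd : z - z⁻¹ ≠ 0 := sub_ne_zero.2 hz2
  obtain ⟨e, he⟩ := FiniteField.exists_nonsquare h2
  have he0 : e ≠ 0 := by rintro rfl; exact he (IsSquare.zero)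
  obtain ⟨x, hx⟩ : ∃ x, (z + z⁻¹ - z⁻¹ * (z + z⁻¹)) / (z - z⁻¹) = x := ⟨_, rfl⟩
  obtain ⟨w, hw⟩ : ∃ w, (z * (z + z⁻¹) - (z + z⁻¹)) / (z - z⁻¹) = w := ⟨_, rfl⟩
  have hDt : (torus z hz).1.trace = z + z⁻¹ := by simp [torus_coe, trace_fin_two]
  have hBt : ∀ y hy, (bMat x w y hy).1.trace = z + z⁻¹ := by
    intro y hy
    rw [bMat_coe, trace_fin_two_of, ← hx, ← hw, ← add_div, div_eq_iff hzd]
    ring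
  have hDBt : ∀ y hy, (torus z hz * bMat x w y hy).1.trace = z + z⁻¹ := by
    intro y hy
    have : (torus z hz * bMat x w y hy).1.trace = z * x + z⁻¹ * w := by
      simp [torus_coe, bMat_coe, trace_fin_two]
    rw [this, ← hx, ← hw, ← mul_div_assoc, ← mul_div_assoc, ← add_div, div_eq_iff hzd]
    ring
  -- The triple attached to a square class; its generation is automatic.
  let T : ∀ y : ZMod p, y ≠ 0 → NielsenTriple C C C := fun y hy =>
    ⟨(torus z hz, bMat x w y hy, (torus z hz * bMat x w y hy)⁻¹), (hC _).2 hDt,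
      (hC _).2 (hBt y hy), (hC _).2 ((trace_inv_sl _).trans (hDBt y hy)), mul_inv_cancel _,
      eq_top_of_trace hp5 ht _ (Subgroup.subset_closure (by simp))
        (Subgroup.subset_closure (by simp)) hDt (hBt y hy) (hDBt y hy)⟩
  rw [Nat.card_eq_two_iff]
  refine ⟨Quot.mk _ (T 1 one_ne_zero), Quot.mk _ (T e he0), ?_, ?_⟩
  · intro heq
    -- The invariant separating the two classes: being conjugate to the first two entries of `T e`.
    let f : NielsenTriple C C C → Prop := fun s =>
      ∃ h : SL₂(ZMod p), torus z hz = h * s.val.1 * h⁻¹ ∧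
        bMat x w e he0 = h * s.val.2.1 * h⁻¹
    have hf : ∀ s s' : NielsenTriple C C C, (∃ h : SL₂(ZMod p), (s'.val : _ × _ × _) =
        (h * s.val.1 * h⁻¹, h * s.val.2.1 * h⁻¹, h * s.val.2.2 * h⁻¹)) → f s = f s' := by
      rintro s s' ⟨h, hh⟩
      apply propext
      simp only [f, hh]
      constructor
      · rintro ⟨k, hk1, hk2⟩
        exact ⟨k * h⁻¹, by rw [hk1]; group, by rw [hk2]; group⟩
      · rintro ⟨k, hk1, hk2⟩
        exact ⟨k * h, by rw [hk1]; group, by rw [hk2]; group⟩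
    have h1 : f (T 1 one_ne_zero) := by
      rw [show f (T 1 one_ne_zero) = f (T e he0) from congrArg (Quot.lift f hf) heq]
      exact ⟨1, by simp [T], by simp [T]⟩
    obtain ⟨h, hh1, hh2⟩ := h1
    obtain ⟨r, -, hr⟩ := exists_sq_mul_of_conj hz hz2 one_ne_zero he0 h hh1 hh2
    exact he ⟨r, by rw [hr]; ring⟩
  · rw [Set.eq_univ_iff_forall]
    rintro ⟨⟨⟨a, b, c⟩, ha, hb, hc, habc, htop⟩⟩
    obtain rfl : c = (a * b)⁻¹ := (inv_eq_of_mul_eq_one_right habc).symm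
    have hab : (a * b).1.trace = z + z⁻¹ := (trace_inv_sl _).symm.trans ((hC _).1 hc)
    obtain ⟨h, y, hy, h1, h2'⟩ := exists_normal_form h5 hz hz2 ht ((hC _).1 ha) ((hC _).1 hb) hab
    simp only [hx, hw] at h2'
    obtain ⟨r, hr, hry⟩ := exists_normal_form_mod_squares he y hy
    have k1 : torus r hr * h * a * (torus r hr * h)⁻¹ = torus z hz := by
      rw [← torus_conj_torus r z hr hz, ← h1]; group
    have k2 : torus r hr * h * b * (torus r hr * h)⁻¹ =
        bMat x w (r ^ 2 * y) (mul_ne_zero (pow_ne_zero 2 hr) hy) := by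
      rw [← torus_conj_bMat r x w y hr hy, ← h2']; group
    have key : ∀ y' hy', r ^ 2 * y = y' →
        (Quot.mk _ ⟨(a, b, (a * b)⁻¹), ha, hb, hc, habc, htop⟩ : Ni C C C) =
          Quot.mk _ (T y' hy') := by
      rintro y' hy' rfl
      refine Quot.sound ⟨torus r hr * h, ?_⟩
      refine Prod.ext k1.symm (Prod.ext k2.symm ?_)
      change (torus z hz * bMat x w _ _)⁻¹ = _
      rw [← k1, ← k2]
      group
    rcases hry with hry | hry
    · exact Or.inl (key _ one_ne_zero hry)
    · exact Or.inr (key _ he0 hry)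
end

/-- for `p ≡ 1 (mod 5)`, `p > 5`, and `ζ5 ∈ 𝔽_p^×` of order `5`, the Nielsen
classes `Ni(5A, 5A, 5A)` and `Ni(5B, 5B, 5B)` each have exactly two elements, where
`5A = {A ∈ SL₂(𝔽_p) : tr A = ζ5 + ζ5⁴}` and `5B = {A ∈ SL₂(𝔽_p) : tr A = ζ5² + ζ5³}`. -/
theorem stmt14 (p : ℕ) (hp : p.Prime) [Fact p.Prime] (hp5 : 5 < p)
    (hpmod : p % 5 = 1) (ζ5 : (ZMod p)ˣ) (hζ5 : orderOf ζ5 = 5) :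
    Nat.card (Ni
      {A : Matrix.SpecialLinearGroup (Fin 2) (ZMod p) |
        Matrix.trace (A : Matrix (Fin 2) (Fin 2) (ZMod p)) =
          ((ζ5 : (ZMod p)ˣ) : ZMod p) + ((ζ5 ^ 4 : (ZMod p)ˣ) : ZMod p)}
      {A : Matrix.SpecialLinearGroup (Fin 2) (ZMod p) |
        Matrix.trace (A : Matrix (Fin 2) (Fin 2) (ZMod p)) =
          ((ζ5 : (ZMod p)ˣ) : ZMod p) + ((ζ5 ^ 4 : (ZMod p)ˣ) : ZMod p)}
      {A : Matrix.SpecialLinearGroup (Fin 2) (ZMod p) |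
        Matrix.trace (A : Matrix (Fin 2) (Fin 2) (ZMod p)) =
          ((ζ5 : (ZMod p)ˣ) : ZMod p) + ((ζ5 ^ 4 : (ZMod p)ˣ) : ZMod p)}) = 2 ∧
    Nat.card (Ni
      {A : Matrix.SpecialLinearGroup (Fin 2) (ZMod p) |
        Matrix.trace (A : Matrix (Fin 2) (Fin 2) (ZMod p)) =
          ((ζ5 ^ 2 : (ZMod p)ˣ) : ZMod p) + ((ζ5 ^ 3 : (ZMod p)ˣ) : ZMod p)}
      {A : Matrix.SpecialLinearGroup (Fin 2) (ZMod p) |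
        Matrix.trace (A : Matrix (Fin 2) (Fin 2) (ZMod p)) =
          ((ζ5 ^ 2 : (ZMod p)ˣ) : ZMod p) + ((ζ5 ^ 3 : (ZMod p)ˣ) : ZMod p)}
      {A : Matrix.SpecialLinearGroup (Fin 2) (ZMod p) |
        Matrix.trace (A : Matrix (Fin 2) (Fin 2) (ZMod p)) =
          ((ζ5 ^ 2 : (ZMod p)ˣ) : ZMod p) + ((ζ5 ^ 3 : (ZMod p)ˣ) : ZMod p)}) = 2 := by
  have h1 : ((ζ5 : (ZMod p)ˣ) : ZMod p) ^ 5 = 1 := by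
    rw [← Units.val_pow_eq_pow_val, ← hζ5, pow_orderOf_eq_one, Units.val_one]
  have h2 : ((ζ5 : (ZMod p)ˣ) : ZMod p) - 1 ≠ 0 := by
    intro h
    rw [sub_eq_zero, Units.val_eq_one] at h
    rw [h, orderOf_one] at hζ5
    omega
  have h0 : ((ζ5 : (ZMod p)ˣ) : ZMod p) ≠ 0 := ζ5.ne_zero
  rw [Units.val_pow_eq_pow_val, Units.val_pow_eq_pow_val, Units.val_pow_eq_pow_val]
  generalize ((ζ5 : (ZMod p)ˣ) : ZMod p) = z at h0 h1 h2
  have h3 : z ^ 4 + z ^ 3 + z ^ 2 + z + 1 = 0 := by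
    refine (mul_eq_zero.1 ?_).resolve_left h2
    linear_combination h1
  have e1 : z⁻¹ = z ^ 4 := inv_eq_of_mul_eq_one_right (by linear_combination h1)
  have e2 : (z ^ 2)⁻¹ = z ^ 3 := inv_eq_of_mul_eq_one_right (by linear_combination h1)
  constructor
  · refine card_Ni hp5 h0 ?_ (fun A => ?_)
    · rw [e1]
      linear_combination (z ^ 3 + 2) * h1 + h3
    · rw [e1]; rfl
  · refine card_Ni hp5 (pow_ne_zero 2 h0) ?_ (fun A => ?_)
    · rw [e2]
      linear_combination (z + 2) * h1 + h3
    · rw [e2]; rfl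
end
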